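/- arXiv:1004.2613 — 2 statements merged into one kernel-verified Lean document; each statement's English description precedes it below -/
import Mathlib

section
/- Let F be a number field and T a torus over F split by a finite Galois extension E/F. Then there exists a positive integer c, depending only on F and T (one may take c = 2·gcd(μ(E), [E:F]) where μ(E) is the number of roots of unity in E), such that for every positive integer k, the Tate–Shafarevich group Ш¹_F(T[k]) = ker(H¹(F, T[k]) → ∏_{𝔭 finite} H¹(F_𝔭, T[k])) is killed by c. -/
open IsDedekindDomain NumberField

/-!
Density. In a nontrivial Galois extension `L/M` of number fields, some prime of `L` has a nontrivial
decomposition group. Otherwise every prime `𝔭` of `M` has two distinct lifts `P`, `σP` to `L` of the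
same norm, so pairs of ideals of `M` inject into the ideals of `L`, with norms multiplying. This is
absurd: the number of ideals of norm at most `x` is of order `x`, but then the number of pairs with
product of norms at most `x` is not `O(x)`, because `∑ N(I)⁻¹` diverges.

Since decomposition groups are images of local Galois groups, a locally trivial cocycle `f` vanishes
on every open normal subgroup `N` which acts trivially on the coefficients.

Sah's lemma. Suppose `A` is a sum of copies of `μ_k` over `E`. For `u` prime to `k`, some `τ` in the
normal core of `Gal(K/E)` raises the `k`-th roots of unity to the power `u ^ D`, with `D` depending
only on `E`. As `τ` is central modulo some `N` as above and acts on `A` by `u ^ D`, the class of `f`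
is killed by `u ^ D - 1`. If `u ≡ 3` modulo the 2-part of `k` and `u ≡ 2` modulo its odd part, then
`(2 ^ D - 1) (3 ^ D - 1)` is a multiple of `u ^ D - 1` modulo `k`.
-/

section GroupCohomology

open groupCohomology

variable {G A : Type*} [Group G] [AddCommGroup A] [DistribMulAction G A] {f : G → A}

/-- The subgroup on which a cocycle vanishes. -/
def cocycleZeros (hf : IsCocycle₁ f) : Subgroup G where
  carrier := {g | f g = 0}
  mul_mem' {g h} (hg : f g = 0) (hh : f h = 0) := show f (g * h) = 0 by
    rw [hf, hg, hh, smul_zero, add_zero]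
  one_mem' := map_one_of_isCocycle₁ hf
  inv_mem' {g} (hg : f g = 0) := show f g⁻¹ = 0 by
    rw [← smul_eq_zero_iff_eq g, map_inv_of_isCocycle₁ hf, hg, neg_zero]

lemma mem_cocycleZeros {hf : IsCocycle₁ f} {g : G} : g ∈ cocycleZeros hf ↔ f g = 0 := Iff.rfl

lemma inf_cocycleZeros_normal (hf : IsCocycle₁ f) {N : Subgroup G} [N.Normal]
    (hN : ∀ g ∈ N, ∀ x : A, g • x = x) : (N ⊓ cocycleZeros hf).Normal where
  conj_mem n hn g := by
    have hconj : g * n * g⁻¹ ∈ N := Subgroup.Normal.conj_mem ‹_› n hn.1 g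
    refine ⟨hconj, ?_⟩
    have hmul := hf (g * n * g⁻¹) g
    rw [inv_mul_cancel_right, hf, mem_cocycleZeros.mp hn.2, smul_zero, zero_add, hN _ hconj,
      left_eq_add] at hmul
    exact hmul

/-- Sah's lemma, for an element `τ` acting by the scalar `a`. -/
lemma sub_one_zsmul_eq_of_commutator_mem (hf : IsCocycle₁ f) {N : Subgroup G}
    (hN : ∀ g ∈ N, f g = 0) {τ : G} {a : ℤ} (hτ : ∀ x : A, τ • x = a • x) {g : G}
    (hg : (τ * g)⁻¹ * (g * τ) ∈ N) : (a - 1) • f g = g • f τ - f τ := by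
  have hcomm : f (g * τ) = f (τ * g) := by
    have h := hf (τ * g) ((τ * g)⁻¹ * (g * τ))
    rwa [mul_inv_cancel_left, hN _ hg, smul_zero, zero_add] at h
  rw [hf, hf, hτ] at hcomm
  rw [sub_smul, one_smul, sub_eq_sub_iff_add_eq_add, ← hcomm]

end GroupCohomology

section Counting

open Asymptotics Filter

/-- The counting function `x ↦ #{i | a i ≤ x}` of a family of sizes; it takes the junk value `0`
where that set is infinite. -/
noncomputable def countLE {α : Type*} (a : α → ℝ) (x : ℝ) : ℝ :=
  Nat.card {i // a i ≤ x}

variable {α β : Type*} {a : α → ℝ} {b : β → ℝ}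

lemma countLE_nonneg (x : ℝ) : 0 ≤ countLE a x := Nat.cast_nonneg _

lemma countLE_le_card_add_mul (ha : ∀ i, 0 < a i) {t : Finset α} {c : ℝ}
    (ht : ∀ s : Finset α, Disjoint s t → ∑ i ∈ s, (a i)⁻¹ ≤ c) {x : ℝ} (hx : 0 < x) :
    countLE a x ≤ t.card + c * x := by
  classical
  have hc : 0 ≤ c := by simpa using ht ∅ (Finset.disjoint_empty_left t)
  rw [countLE]
  rcases finite_or_infinite {i // a i ≤ x} with hfin | hinf
  · have hS : {i | a i ≤ x}.Finite := Set.finite_coe_iff.mp hfin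
    have hcard : Nat.card {i // a i ≤ x} = hS.toFinset.card := Nat.card_eq_card_finite_toFinset hS
    have htail : ((hS.toFinset \ t).card : ℝ) * x⁻¹ ≤ c := by
      rw [← nsmul_eq_mul]
      refine (Finset.card_nsmul_le_sum _ _ _ fun i hi ↦ ?_).trans (ht _ Finset.sdiff_disjoint)
      exact inv_anti₀ (ha i) (by simpa using (Finset.mem_sdiff.mp hi).1)
    have hsplit : (hS.toFinset.card : ℝ) ≤ (hS.toFinset \ t).card + t.card :=
      mod_cast Finset.card_le_card_sdiff_add_card
    rw [mul_inv_le_iff₀ hx] at htail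
    rw [hcard]
    linarith
  · rw [Nat.card_eq_zero_of_infinite, Nat.cast_zero]
    positivity

lemma countLE_isLittleO_id_of_summable_inv (ha : ∀ i, 0 < a i) (hs : Summable fun i ↦ (a i)⁻¹) :
    countLE a =o[atTop] id := by
  refine isLittleO_iff.mpr fun c hc ↦ ?_
  obtain ⟨t, ht⟩ := summable_iff_vanishing_norm.mp hs (c / 2) (half_pos hc)
  have ht' (s : Finset α) (h : Disjoint s t) : ∑ i ∈ s, (a i)⁻¹ ≤ c / 2 :=
    (le_abs_self _).trans (ht s h).le
  filter_upwards [(tendsto_id.const_mul_atTop (half_pos hc)).eventually_ge_atTop (t.card : ℝ),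
    eventually_gt_atTop 0] with x htx hx
  rw [id_eq] at htx
  rw [Real.norm_of_nonneg (countLE_nonneg x), id_eq, Real.norm_of_nonneg hx.le]
  linarith [countLE_le_card_add_mul ha ht' hx]

lemma sum_countLE_div_le (ha : ∀ i, 0 < a i) {Φ : α × α → β} (hΦ : Function.Injective Φ)
    (hmul : ∀ i j, b (Φ (i, j)) = a i * a j) {x : ℝ} (hb : {i | b i ≤ x}.Finite) (u : Finset α) :
    ∑ j ∈ u, countLE a (x / a j) ≤ countLE b x := by
  have : Finite {i // b i ≤ x} := hb.to_subtype
  let Ψ (p : Σ j : u, {i // a i ≤ x / a j}) : {i // b i ≤ x} :=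
    ⟨Φ (p.2.1, p.1.1), (hmul _ _).trans_le ((le_div_iff₀ (ha _)).mp p.2.2)⟩
  have hΨ : Function.Injective Ψ := by
    rintro ⟨⟨j, hj⟩, ⟨i, hi⟩⟩ ⟨⟨j', hj'⟩, ⟨i', hi'⟩⟩ h
    obtain ⟨rfl, rfl⟩ := Prod.mk.inj (hΦ (Subtype.ext_iff.mp h))
    rfl
  have (j : u) : Finite {i // a i ≤ x / a j} :=
    Finite.of_injective (fun i ↦ Ψ ⟨j, i⟩) (hΨ.comp sigma_mk_injective)
  simp only [countLE]
  rw [← Nat.cast_sum, ← Finset.sum_coe_sort, ← Nat.card_sigma]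
  exact mod_cast Nat.card_le_card_of_injective Ψ hΨ

lemma summable_inv_of_injective_pairs (ha : ∀ i, 0 < a i) (hb : ∀ x, {i | b i ≤ x}.Finite)
    {Φ : α × α → β} (hΦ : Function.Injective Φ) (hmul : ∀ i j, b (Φ (i, j)) = a i * a j)
    (hga : id =O[atTop] countLE a) (hgb : countLE b =O[atTop] id) :
    Summable fun i ↦ (a i)⁻¹ := by
  obtain ⟨r, hr, hga⟩ := hga.exists_pos
  obtain ⟨s, -, hgb⟩ := hgb.exists_pos
  refine summable_of_sum_le (c := r * s) (fun i ↦ inv_nonneg.mpr (ha i).le) fun u ↦ ?_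
  have hlow : ∀ᶠ x in atTop, ∀ j ∈ u, ‖id (x / a j)‖ ≤ r * ‖countLE a (x / a j)‖ :=
    (Finset.eventually_all u).mpr fun j _ ↦ (tendsto_id.atTop_div_const (ha j)).eventually hga.bound
  obtain ⟨x, hlow, hup, hx⟩ := (hlow.and (hgb.bound.and (eventually_gt_atTop 0))).exists
  rw [Real.norm_of_nonneg (countLE_nonneg x), id_eq, Real.norm_of_nonneg hx.le] at hup
  refine le_of_mul_le_mul_right ?_ hx
  calc (∑ j ∈ u, (a j)⁻¹) * x = ∑ j ∈ u, x / a j := by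
        simp_rw [Finset.sum_mul, div_eq_inv_mul]
    _ ≤ ∑ j ∈ u, r * countLE a (x / a j) := Finset.sum_le_sum fun j hj ↦ by
        simpa only [id_eq, Real.norm_of_nonneg (div_pos hx (ha j)).le,
          Real.norm_of_nonneg (countLE_nonneg _)] using hlow j hj
    _ = r * ∑ j ∈ u, countLE a (x / a j) := (Finset.mul_sum ..).symm
    _ ≤ r * countLE b x := by gcongr; exact sum_countLE_div_le ha hΦ hmul (hb x) u
    _ ≤ r * s * x := by rw [mul_assoc]; gcongr

lemma not_injective_pairs_of_isTheta_countLE (ha : ∀ i, 0 < a i) (hb : ∀ x, {i | b i ≤ x}.Finite)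
    (hga : countLE a =Θ[atTop] id) (hgb : countLE b =O[atTop] id) {Φ : α × α → β}
    (hmul : ∀ i j, b (Φ (i, j)) = a i * a j) : ¬ Function.Injective Φ := fun hΦ ↦ by
  have hsum := summable_inv_of_injective_pairs ha hb hΦ hmul hga.2 hgb
  have hid : (id : ℝ → ℝ) =o[atTop] id :=
    hga.2.trans_isLittleO (countLE_isLittleO_id_of_summable_inv ha hsum)
  exact isLittleO_irrefl (eventually_ne_atTop 0).frequently hid

end Counting

section PrimeLifts

open UniqueFactorizationMonoid nonZeroDivisors

variable {A B : Type*} [CommRing A] [IsDedekindDomain A] [CommRing B]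

/-- The multiplicative extension of a map `P` on primes to all nonzero ideals: `∏ pᵢ` is sent to
`∏ P pᵢ`. The zero ideal has no prime factors and is sent to `1`. -/
noncomputable def liftIdeal (P : Ideal A → Ideal B) (I : Ideal A) : Ideal B :=
  ((normalizedFactors I).map P).prod

/-- A section of the restriction map from the nonzero primes of `B` to those of `A`. It is encoded
as a map on all ideals, of which only the values at nonzero primes matter. -/
structure IsPrimeSection [Algebra A B] (P : Ideal A → Ideal B) : Prop where
  prime : ∀ p, Prime p → Prime (P p)
  under_eq : ∀ p, Prime p → (P p).under A = p

variable {P Q : Ideal A → Ideal B}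

lemma map_under_map_normalizedFactors [Algebra A B]
    (hP : ∀ p, Prime p → (P p).under A = p) (I : Ideal A) :
    ((normalizedFactors I).map P).map (Ideal.under A) = normalizedFactors I := by
  rw [Multiset.map_map]
  exact (Multiset.map_congr rfl fun p hp ↦ hP p (prime_of_normalized_factor p hp)).trans
    (Multiset.map_id _)

lemma eq_of_map_normalizedFactors_eq [Algebra A B] (hP : ∀ p, Prime p → (P p).under A = p)
    {I J : Ideal A} (hI : I ≠ ⊥) (hJ : J ≠ ⊥)
    (h : (normalizedFactors I).map P = (normalizedFactors J).map P) : I = J := by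
  rw [← Ideal.prod_normalizedFactors_eq_self hI, ← Ideal.prod_normalizedFactors_eq_self hJ,
    ← map_under_map_normalizedFactors hP I, h, map_under_map_normalizedFactors hP J]

variable [IsDedekindDomain B]

lemma normalizedFactors_liftIdeal (hP : ∀ p, Prime p → Prime (P p)) (I : Ideal A) :
    normalizedFactors (liftIdeal P I) = (normalizedFactors I).map P :=
  normalizedFactors_prod_of_prime fun _ hx ↦ by
    obtain ⟨p, hp, rfl⟩ := Multiset.mem_map.mp hx
    exact hP p (prime_of_normalized_factor p hp)

lemma liftIdeal_ne_zero (hP : ∀ p, Prime p → Prime (P p)) (I : Ideal A) : liftIdeal P I ≠ 0 :=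
  Multiset.prod_ne_zero fun h ↦ by
    obtain ⟨p, hp, h0⟩ := Multiset.mem_map.mp h
    exact (hP p (prime_of_normalized_factor p hp)).ne_zero h0

lemma absNorm_liftIdeal [Module.Free ℤ A] [Module.Free ℤ B]
    (hP : ∀ p, Prime p → (P p).absNorm = p.absNorm) {I : Ideal A} (hI : I ≠ ⊥) :
    (liftIdeal P I).absNorm = I.absNorm := by
  conv_rhs => rw [← Ideal.prod_normalizedFactors_eq_self hI]
  rw [liftIdeal, map_multiset_prod, map_multiset_prod, Multiset.map_map]
  exact congrArg Multiset.prod <|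
    Multiset.map_congr rfl fun p hp ↦ hP p (prime_of_normalized_factor p hp)

lemma eq_and_eq_of_liftIdeal_mul_liftIdeal_eq [Algebra A B] (hP : IsPrimeSection P)
    (hQ : IsPrimeSection Q) (hPQ : ∀ p, Prime p → P p ≠ Q p)
    {I J I' J' : Ideal A} (hI : I ≠ ⊥) (hJ : J ≠ ⊥) (hI' : I' ≠ ⊥) (hJ' : J' ≠ ⊥)
    (h : liftIdeal P I * liftIdeal Q J = liftIdeal P I' * liftIdeal Q J') : I = I' ∧ J = J' := by
  classical
  have hfactors (I J : Ideal A) : normalizedFactors (liftIdeal P I * liftIdeal Q J) =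
      (normalizedFactors I).map P + (normalizedFactors J).map Q := by
    rw [normalizedFactors_mul (liftIdeal_ne_zero hP.prime I) (liftIdeal_ne_zero hQ.prime J),
      normalizedFactors_liftIdeal hP.prime,
      normalizedFactors_liftIdeal hQ.prime]
  have hfilter (I J : Ideal A) : (normalizedFactors (liftIdeal P I * liftIdeal Q J)).filter
      (fun x ↦ P (x.under A) = x) = (normalizedFactors I).map P := by
    rw [hfactors, Multiset.filter_add, Multiset.filter_eq_self.mpr, Multiset.filter_eq_nil.mpr,
      add_zero]
    · refine Multiset.forall_mem_map_iff.mpr fun q hq ↦ ?_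
      have hq := prime_of_normalized_factor q hq
      exact (hQ.under_eq q hq).symm ▸ hPQ q hq
    · refine Multiset.forall_mem_map_iff.mpr fun p hp ↦ ?_
      rw [hP.under_eq p (prime_of_normalized_factor p hp)]
  have hfst := (hfilter I J).symm.trans ((congrArg _ (congrArg _ h)).trans (hfilter I' J'))
  have hsnd := congrArg normalizedFactors h
  rw [hfactors, hfactors, hfst, add_right_inj] at hsnd
  exact ⟨eq_of_map_normalizedFactors_eq hP.under_eq hI hI' hfst,
    eq_of_map_normalizedFactors_eq hQ.under_eq hJ hJ' hsnd⟩

end PrimeLifts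

section IdealCounting

open Asymptotics Filter nonZeroDivisors

lemma countLE_absNorm_isTheta_id (M : Type*) [Field M] [NumberField M] :
    countLE (fun I : (Ideal (𝓞 M))⁰ ↦ ((I : Ideal (𝓞 M)).absNorm : ℝ)) =Θ[atTop] id :=
  (isTheta_of_div_tendsto_nhds_ne_zero (NumberField.Ideal.tendsto_norm_le_div_atTop₀ M)
    (dedekindZeta_residue_pos M).ne').symm

theorem exists_eq_of_norm_preserving_prime_sections {M L : Type*} [Field M] [NumberField M]
    [Field L] [NumberField L] [Algebra M L] {P Q : Ideal (𝓞 M) → Ideal (𝓞 L)}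
    (hP : IsPrimeSection P) (hQ : IsPrimeSection Q)
    (hPn : ∀ p, Prime p → (P p).absNorm = p.absNorm)
    (hQn : ∀ p, Prime p → (Q p).absNorm = p.absNorm) : ∃ p, Prime p ∧ P p = Q p := by
  by_contra! hPQ
  let Φ (x : (Ideal (𝓞 M))⁰ × (Ideal (𝓞 M))⁰) : (Ideal (𝓞 L))⁰ :=
    ⟨liftIdeal P x.1 * liftIdeal Q x.2, mem_nonZeroDivisors_of_ne_zero <|
      mul_ne_zero (liftIdeal_ne_zero hP.prime _) (liftIdeal_ne_zero hQ.prime _)⟩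
  have ne_bot (I : (Ideal (𝓞 M))⁰) : (I : Ideal (𝓞 M)) ≠ ⊥ := nonZeroDivisors.ne_zero I.2
  have hΦ : Function.Injective Φ := fun x y h ↦ by
    obtain ⟨hfst, hsnd⟩ := eq_and_eq_of_liftIdeal_mul_liftIdeal_eq hP hQ hPQ
      (ne_bot x.1) (ne_bot x.2) (ne_bot y.1) (ne_bot y.2) (Subtype.ext_iff.mp h)
    exact Prod.ext (Subtype.ext hfst) (Subtype.ext hsnd)
  have hfinite (x : ℝ) : {J : (Ideal (𝓞 L))⁰ | ((J : Ideal (𝓞 L)).absNorm : ℝ) ≤ x}.Finite :=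
    (Ideal.finite_setOfPred_absNorm_le₀ ⌊x⌋₊).subset fun _ hJ ↦ Nat.le_floor hJ
  refine not_injective_pairs_of_isTheta_countLE
    (fun I ↦ Nat.cast_pos.mpr (Ideal.absNorm_pos_of_nonZeroDivisors I)) hfinite
    (countLE_absNorm_isTheta_id M) (countLE_absNorm_isTheta_id L).1 (fun I J ↦ ?_) hΦ
  simp only [Φ]
  rw [map_mul, absNorm_liftIdeal hPn (ne_bot I), absNorm_liftIdeal hQn (ne_bot J), Nat.cast_mul]

end IdealCounting

section Decomposition

open MulAction Pointwise

lemma absNorm_eq_of_stabilizer_eq_bot {M L : Type*} [Field M] [NumberField M] [Field L]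
    [NumberField L] [Algebra M L] [IsGalois M L] {p : Ideal (𝓞 M)} (hp : Prime p)
    (P : Ideal (𝓞 L)) [P.IsPrime] [P.LiesOver p] (hP : stabilizer Gal(L/M) P = ⊥) :
    P.absNorm = p.absNorm := by
  have hp0 : p ≠ ⊥ := hp.ne_zero
  have hpp : p.IsPrime := Ideal.isPrime_of_prime hp
  have hpm : p.IsMaximal := hpp.isMaximal hp0
  have hPm : P.IsMaximal := Ideal.IsPrime.isMaximal ‹_› (Ideal.ne_bot_of_liesOver_of_ne_bot hp0 P)
  have hcard : (p.primesOver (𝓞 L)).ncard = Nat.card Gal(L/M) := by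
    rw [← Algebra.IsInvariant.orbit_eq_primesOver (𝓞 M) (𝓞 L) Gal(L/M) p P,
      ← index_stabilizer, hP, Subgroup.index_bot]
  have hefg := Ideal.ncard_primesOver_mul_ramificationIdxIn_mul_inertiaDegIn p (𝓞 L) Gal(L/M)
  rw [hcard, mul_eq_left₀ Nat.card_pos.ne'] at hefg
  rw [Ideal.absNorm_eq_pow_inertiaDeg'_of_liesOver P p hpp hp0, Ideal.inertiaDeg'_eq_inertiaDeg,
    ← Ideal.inertiaDegIn_eq_inertiaDeg p P Gal(L/M), (mul_eq_one.mp hefg).2, pow_one]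

theorem exists_stabilizer_ne_bot (M L : Type*) [Field M] [NumberField M] [Field L]
    [NumberField L] [Algebra M L] [IsGalois M L] [Nontrivial Gal(L/M)] :
    ∃ P : Ideal (𝓞 L), Prime P ∧ stabilizer Gal(L/M) P ≠ ⊥ := by
  by_contra! h
  obtain ⟨σ, hσ⟩ := exists_ne (1 : Gal(L/M))
  have hover (p : Ideal (𝓞 M)) (hp : Prime p) :
      ∃ P : Ideal (𝓞 L), Prime P ∧ P.under (𝓞 M) = p ∧ P.absNorm = p.absNorm := by
    have := Ideal.isPrime_of_prime hp
    obtain ⟨P, hPp, hPover⟩ := Ideal.nonempty_primesOver (S := 𝓞 L) p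
    have hP := Ideal.prime_of_isPrime (Ideal.ne_bot_of_liesOver_of_ne_bot hp.ne_zero P) hPp
    exact ⟨P, hP, hPover.over.symm, absNorm_eq_of_stabilizer_eq_bot hp P (h P hP)⟩
  choose! P hP hPu hPn using hover
  have hσPu (p : Ideal (𝓞 M)) (hp : Prime p) : (σ • P p).under (𝓞 M) = p := by
    rw [Ideal.under_smul, hPu p hp]
  have hσP (p : Ideal (𝓞 M)) (hp : Prime p) : Prime (σ • P p) := by
    have := Ideal.isPrime_of_prime (hP p hp)
    have : (σ • P p).LiesOver p := ⟨(hσPu p hp).symm⟩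
    exact Ideal.prime_of_isPrime (Ideal.ne_bot_of_liesOver_of_ne_bot hp.ne_zero _) inferInstance
  obtain ⟨p, hp, heq⟩ := exists_eq_of_norm_preserving_prime_sections ⟨hP, hPu⟩ ⟨hσP, hσPu⟩ hPn
    fun p hp ↦
      have := Ideal.isPrime_of_prime (hσP p hp)
      have : (σ • P p).LiesOver p := ⟨(hσPu p hp).symm⟩
      absNorm_eq_of_stabilizer_eq_bot hp (σ • P p) (h _ (hσP p hp))
  have hmem : σ ∈ stabilizer Gal(L/M) (P p) := heq.symm
  rw [h _ (hP p hp)] at hmem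
  exact hσ hmem

theorem exists_inf_stabilizer_ne_bot {F L : Type*} [Field F] [NumberField F] [Field L]
    [NumberField L] [Algebra F L] {S : Subgroup Gal(L/F)} (hS : S ≠ ⊥) :
    ∃ P : Ideal (𝓞 L), Prime P ∧ S ⊓ stabilizer Gal(L/F) P ≠ ⊥ := by
  let M := IntermediateField.fixedField S
  have : NumberField M := .of_module_finite F M
  have : IsGalois M L := IsGalois.of_fixed_field L S
  have hfix : M.fixingSubgroup = S := IntermediateField.fixingSubgroup_fixedField S
  have : Nontrivial Gal(L/M) := by
    rw [(IntermediateField.fixingSubgroupEquiv M).symm.toEquiv.nontrivial_congr,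
      Subgroup.nontrivial_iff_ne_bot, hfix]
    exact hS
  obtain ⟨P, hP, hne⟩ := exists_stabilizer_ne_bot M L
  obtain ⟨⟨σ, hσP⟩, hσ⟩ := Subgroup.ne_bot_iff_exists_ne_one.mp hne
  let g := (IntermediateField.fixingSubgroupEquiv M).symm σ
  have hg : (g : Gal(L/F)) ≠ 1 := fun h ↦ hσ <| Subtype.ext <|
    (EmbeddingLike.map_eq_one_iff (f := (IntermediateField.fixingSubgroupEquiv M).symm)).mp
      (Subtype.ext h)
  exact ⟨P, hP, Subgroup.ne_bot_iff_exists_ne_one.mpr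
    ⟨⟨g, hfix ▸ g.2, hσP⟩, fun h ↦ hg (congrArg Subtype.val h)⟩⟩

end Decomposition

section LocalGalois

variable {F k K Ω : Type*} [Field F] [Field k] [Field K] [Field Ω] [Algebra F k] [Algebra F K]
  [Algebra F Ω] [Algebra k Ω] [IsScalarTower F k Ω] [Normal F K]

/-- The homomorphism `Gal(Ω/k) → Gal(K/F)` induced by an embedding `ι` of a normal extension `K`
of `F` into an extension `Ω` of `k ⊇ F`. For `k` a completion of a number field `F` and `Ω` its
algebraic closure, this is the map from the local to the global Galois group. -/
noncomputable def restrictHom (ι : K →ₐ[F] Ω) : Gal(Ω/k) →* Gal(K/F) :=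
  letI := ι.toRingHom.toAlgebra
  haveI : IsScalarTower F K Ω := .of_algebraMap_eq fun x ↦ (ι.commutes x).symm
  (AlgEquiv.restrictNormalHom K).comp (AlgEquiv.restrictScalarsHom F)

lemma apply_restrictHom (ι : K →ₐ[F] Ω) (γ : Gal(Ω/k)) (x : K) :
    ι (restrictHom ι γ x) = γ (ι x) := by
  let := ι.toRingHom.toAlgebra
  have : IsScalarTower F K Ω := .of_algebraMap_eq fun x ↦ (ι.commutes x).symm
  exact AlgEquiv.restrictNormal_commutes (γ.restrictScalars F) K x

lemma restrictHom_apply_eq_iff {ι : K →ₐ[F] Ω} {γ : Gal(Ω/k)} {x y : K} :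
    restrictHom ι γ x = y ↔ γ (ι x) = ι y := by
  rw [← apply_restrictHom]
  exact ι.injective.eq_iff.symm

lemma restrictHom_comp_algEquiv (ι : K →ₐ[F] Ω) (g : Gal(K/F)) (γ : Gal(Ω/k)) :
    restrictHom (ι.comp g.toAlgHom) γ = g⁻¹ * restrictHom ι γ * g := by
  ext x
  rw [restrictHom_apply_eq_iff]
  simp [AlgEquiv.mul_apply, apply_restrictHom]

lemma restrictNormalHom_restrictHom (ι : K →ₐ[F] Ω) (L : IntermediateField F K) [Normal F L]
    (γ : Gal(Ω/k)) :
    AlgEquiv.restrictNormalHom L (restrictHom ι γ) = restrictHom (ι.comp L.val) γ := by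
  ext x
  rw [AlgEquiv.restrictNormalHom_apply, restrictHom_apply_eq_iff]
  exact (apply_restrictHom (ι.comp L.val) γ x).symm

end LocalGalois

section Center

open MulAction NNReal Pointwise

variable {L : Type*} [Field L]

lemma valuation_le_one_of_isIntegral {Γ₀ : Type*} [LinearOrderedCommGroupWithZero Γ₀]
    (w : Valuation L Γ₀) {x : L} (hx : IsIntegral ℤ x) : w x ≤ 1 :=
  (Valuation.integer.integers w).mem_of_integral (hx.tower_top (A := w.integer))

/-- The center on `𝓞 L` of a valuation `w`: the prime ideal where `w < 1`. -/
def valuationCenter (w : Valuation L ℝ≥0) : Ideal (𝓞 L) where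
  carrier := {x | w (x : L) < 1}
  add_mem' ha hb := by simpa using (w.map_add _ _).trans_lt (max_lt ha hb)
  zero_mem' := by simp
  smul_mem' a _ hb := by
    simpa using mul_lt_one_of_nonneg_of_lt_one_right
      (valuation_le_one_of_isIntegral w a.isIntegral_coe) zero_le hb

variable {w : Valuation L ℝ≥0}

lemma mem_valuationCenter {x : 𝓞 L} : x ∈ valuationCenter w ↔ w (x : L) < 1 := Iff.rfl

lemma valuation_eq_one_of_notMem_center {x : 𝓞 L} (hx : x ∉ valuationCenter w) :
    w (x : L) = 1 :=
  (valuation_le_one_of_isIntegral w x.isIntegral_coe).antisymm (not_lt.mp hx)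

instance valuationCenter_isPrime : (valuationCenter w).IsPrime where
  ne_top' := by simp [Ideal.ne_top_iff_one, mem_valuationCenter]
  mem_or_mem' {x y} h := by
    by_contra! hxy
    rw [mem_valuationCenter] at h
    simp [valuation_eq_one_of_notMem_center hxy.1, valuation_eq_one_of_notMem_center hxy.2] at h

variable [NumberField L]

lemma exists_mul_eq_of_valuation_le_one (h0 : valuationCenter w ≠ ⊥) {x : L} (hx : w x ≤ 1) :
    ∃ n d : 𝓞 L, d ∉ valuationCenter w ∧ x * d = n := by
  obtain ⟨n, ⟨d, hd⟩, h | h⟩ := HeightOneSpectrum.exists_primeCompl_mul_eq_or_mul_eq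
    (⟨valuationCenter w, inferInstance, h0⟩ : HeightOneSpectrum (𝓞 L)) x
  · exact ⟨n, d, hd, h⟩
  · refine ⟨d, n, fun hn ↦ ?_, h⟩
    have hlt : w x * w (n : L) < 1 := mul_lt_one_of_nonneg_of_lt_one_right hx zero_le hn
    rw [← map_mul, h, valuation_eq_one_of_notMem_center hd] at hlt
    exact hlt.false

variable {F : Type*} [Field F] [Algebra F L] {σ : Gal(L/F)}

lemma valuation_apply_le_one_of_mem_stabilizer (h0 : valuationCenter w ≠ ⊥)
    (hσ : σ ∈ stabilizer Gal(L/F) (valuationCenter w)) {x : L} (hx : w x ≤ 1) : w (σ x) ≤ 1 := by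
  obtain ⟨n, d, hd, h⟩ := exists_mul_eq_of_valuation_le_one h0 hx
  have hσd : σ • d ∉ valuationCenter w := fun hmem ↦
    hd <| Ideal.smul_mem_pointwise_smul_iff.mp ((mem_stabilizer_iff.mp hσ).symm ▸ hmem)
  have hσn : σ x * (σ • d : 𝓞 L) = (σ • n : 𝓞 L) := (map_mul σ x d).symm.trans (congrArg σ h)
  calc w (σ x) = w (σ x) * w ((σ • d : 𝓞 L) : L) := by
        rw [valuation_eq_one_of_notMem_center hσd, mul_one]
    _ = w ((σ • n : 𝓞 L) : L) := by rw [← map_mul, hσn]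
    _ ≤ 1 := valuation_le_one_of_isIntegral w (σ • n).isIntegral_coe

/-- If `a ∈ F` is within `|π|ʲ` of `x`, then so is `σ x`: the quotient `(x - a) / πʲ` lies in the
valuation ring, which `σ` preserves. -/
lemma apply_eq_self_of_forall_exists_valuation_sub_lt (h0 : valuationCenter w ≠ ⊥)
    (hσ : σ ∈ stabilizer Gal(L/F) (valuationCenter w)) {π : F} (hπ0 : π ≠ 0)
    (hπ1 : w (algebraMap F L π) < 1) {x : L}
    (hx : ∀ ε, 0 < ε → ∃ a : F, w (x - algebraMap F L a) < ε) : σ x = x := by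
  by_contra hne
  have hpos : 0 < w (σ x - x) := by simpa [pos_iff_ne_zero, sub_eq_zero] using hne
  obtain ⟨j, hj⟩ := NNReal.exists_pow_lt_of_lt_one hpos hπ1
  have hπj : 0 < w (algebraMap F L π) ^ j := pow_pos (by simpa [pos_iff_ne_zero] using hπ0) j
  obtain ⟨a, ha⟩ := hx _ hπj
  have hxa : w ((x - algebraMap F L a) / algebraMap F L π ^ j) ≤ 1 := by
    rw [map_div₀, map_pow]
    exact ((div_lt_one hπj).mpr ha).le
  have hσxa := valuation_apply_le_one_of_mem_stabilizer h0 hσ hxa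
  rw [map_div₀, map_sub, map_pow, σ.commutes, σ.commutes, map_div₀, map_pow, div_le_one hπj]
    at hσxa
  refine hj.not_ge ?_
  rw [← sub_sub_sub_cancel_right (σ x) x (algebraMap F L a)]
  exact (w.map_sub _ _).trans (max_le hσxa ha.le)

end Center

section DecompositionGroup

open MulAction NNReal Pointwise

lemma exists_valuation_algebraicClosure (k : Type*) [NontriviallyNormedField k]
    [IsUltrametricDist k] [CompleteSpace k] :
    ∃ w : Valuation (AlgebraicClosure k) ℝ≥0, ∀ x, w (algebraMap k _ x) = ‖x‖₊ := by
  let : NormedField (AlgebraicClosure k) := spectralNorm.normedField k (AlgebraicClosure k)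
  have : IsUltrametricDist (AlgebraicClosure k) :=
    IsUltrametricDist.isUltrametricDist_of_isNonarchimedean_norm isNonarchimedean_spectralNorm
  exact ⟨NormedField.valuation, fun x ↦ NNReal.eq (spectralNorm_extends x)⟩

variable {F : Type*} [Field F] [NumberField F]

lemma exists_valuation_algebraicClosure_adicCompletion (v : HeightOneSpectrum (𝓞 F)) :
    ∃ w : Valuation (AlgebraicClosure (v.adicCompletion F)) ℝ≥0,
      ∀ x, w (algebraMap (v.adicCompletion F) _ x) = ‖x‖₊ := by
  obtain ⟨π, hπv, hπ0⟩ := Submodule.exists_mem_ne_zero_of_ne_bot v.ne_bot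
  let : NontriviallyNormedField (v.adicCompletion F) :=
    .ofNormNeOne ⟨algebraMap F (v.adicCompletion F) π, by simpa using hπ0,
      ((FinitePlace.norm_lt_one_iff_mem F v π).mpr hπv).ne⟩
  exact exists_valuation_algebraicClosure (v.adicCompletion F)

lemma mem_range_algebraMap_of_forall_apply_eq {k : Type*} [Field k] [CharZero k]
    {x : AlgebraicClosure k} (hx : ∀ γ : Gal(AlgebraicClosure k/k), γ x = x) :
    x ∈ Set.range (algebraMap k (AlgebraicClosure k)) :=
  IntermediateField.mem_bot.mp <| (InfiniteGalois.mem_bot_iff_fixed x).mpr hx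

variable {L : Type*} [Field L] [NumberField L] [Algebra F L] [IsGalois F L]

/-- An element of `L` fixed by the local Galois group lies in `F_v`, hence is a limit of elements
of `F`, and limits of elements of `F` are fixed by the decomposition group. -/
lemma exists_stabilizer_le_range_restrictHom_of_algHom (v : HeightOneSpectrum (𝓞 F))
    (ι : L →ₐ[F] AlgebraicClosure (v.adicCompletion F)) :
    ∃ P : Ideal (𝓞 L), P.IsPrime ∧ P.LiesOver v.asIdeal ∧
      stabilizer Gal(L/F) P ≤ (restrictHom (k := v.adicCompletion F) ι).range := by
  have : CharZero (v.adicCompletion F) :=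
    charZero_of_injective_algebraMap (algebraMap F (v.adicCompletion F)).injective
  obtain ⟨w, hw⟩ := exists_valuation_algebraicClosure_adicCompletion v
  have hwF (a : F) : w.comap ι.toRingHom (algebraMap F L a) =
      ‖algebraMap F (v.adicCompletion F) a‖₊ := by
    rw [Valuation.comap_apply, ← hw, ← IsScalarTower.algebraMap_apply]
    exact congrArg w (ι.commutes a)
  set P := valuationCenter (w.comap ι.toRingHom)
  have hPv : P.LiesOver v.asIdeal := ⟨v.isMaximal.eq_of_le (Ideal.IsPrime.under _ P).ne_top
    fun a ha ↦ (hwF a).trans_lt ((FinitePlace.norm_lt_one_iff_mem F v a).mpr ha)⟩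
  obtain ⟨π, hπv, hπ0⟩ := Submodule.exists_mem_ne_zero_of_ne_bot v.ne_bot
  refine ⟨P, inferInstance, hPv, fun σ hσ ↦ ?_⟩
  rw [← IntermediateField.fixingSubgroup_fixedField (restrictHom ι).range,
    IntermediateField.mem_fixingSubgroup_iff]
  intro x hx
  refine apply_eq_self_of_forall_exists_valuation_sub_lt
    (Ideal.ne_bot_of_liesOver_of_ne_bot v.ne_bot P) hσ (π := (π : F)) (by simpa using hπ0)
    ((hwF π).trans_lt ((FinitePlace.norm_lt_one_iff_mem F v π).mpr hπv)) fun ε hε ↦ ?_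
  obtain ⟨y, hy⟩ := mem_range_algebraMap_of_forall_apply_eq fun γ ↦
    restrictHom_apply_eq_iff.mp <| IntermediateField.mem_fixedField_iff _ _ |>.mp hx _ ⟨γ, rfl⟩
  obtain ⟨_, hay, a, rfl⟩ :=
    Metric.dense_iff.mp (HeightOneSpectrum.denseRange_algebraMap F v) y ε hε
  have hιa : ι.toRingHom (algebraMap F L a) =
      algebraMap (v.adicCompletion F) _ (algebraMap F (v.adicCompletion F) a) :=
    (ι.commutes a).trans (IsScalarTower.algebraMap_apply ..)
  refine ⟨a, ?_⟩
  rw [Valuation.comap_apply, map_sub, hιa, show ι.toRingHom x = _ from hy.symm, ← map_sub, hw]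
  rwa [Metric.mem_ball, dist_comm, dist_eq_norm] at hay

theorem exists_stabilizer_le_range_restrictHom {P : Ideal (𝓞 L)} (hP : Prime P) :
    ∃ (v : HeightOneSpectrum (𝓞 F)) (ι : L →ₐ[F] AlgebraicClosure (v.adicCompletion F)),
      stabilizer Gal(L/F) P ≤ (restrictHom (k := v.adicCompletion F) ι).range := by
  have := Ideal.isPrime_of_prime hP
  let v : HeightOneSpectrum (𝓞 F) :=
    ⟨P.under (𝓞 F), inferInstance, Ideal.IsIntegral.comap_ne_bot (𝓞 F) hP.ne_zero⟩
  have : P.LiesOver v.asIdeal := ⟨rfl⟩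
  let ι : L →ₐ[F] AlgebraicClosure (v.adicCompletion F) := IsAlgClosed.lift
  obtain ⟨P', hP', hP'v, hstab⟩ := exists_stabilizer_le_range_restrictHom_of_algHom v ι
  obtain ⟨g, rfl⟩ := Ideal.exists_smul_eq_of_isGaloisGroup v.asIdeal P P' Gal(L/F)
  refine ⟨v, ι.comp g.toAlgHom, fun σ hσ ↦ ?_⟩
  have hconj : g * σ * g⁻¹ ∈ stabilizer Gal(L/F) (g • P) := by
    rw [mem_stabilizer_iff] at hσ ⊢
    rw [mul_smul, inv_smul_smul, mul_smul, hσ]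
  obtain ⟨γ, hγ⟩ := hstab hconj
  refine ⟨γ, ?_⟩
  rw [restrictHom_comp_algEquiv, hγ]
  group

end DecompositionGroup

section LocalGlobal

variable {F K : Type*} [Field F] [NumberField F] [Field K] [Algebra F K]

theorem eq_bot_of_forall_inf_range_restrictHom_eq_bot {L : Type*} [Field L] [NumberField L]
    [Algebra F L] [IsGalois F L] {S : Subgroup Gal(L/F)}
    (hS : ∀ (v : HeightOneSpectrum (𝓞 F)) (ι : L →ₐ[F] AlgebraicClosure (v.adicCompletion F)),
      S ⊓ (restrictHom (k := v.adicCompletion F) ι).range = ⊥) : S = ⊥ := by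
  by_contra hne
  obtain ⟨P, hP, hSP⟩ := exists_inf_stabilizer_ne_bot hne
  obtain ⟨v, ι, hι⟩ := exists_stabilizer_le_range_restrictHom (F := F) hP
  exact hSP (eq_bot_mono (inf_le_inf_left S hι) (hS v ι))

theorem le_of_forall_inf_range_restrictHom_le [IsGalois F K] {H N : Subgroup Gal(K/F)} [H.Normal]
    (hH : IsOpen (H : Set Gal(K/F))) (hHN : H ≤ N)
    (h : ∀ (v : HeightOneSpectrum (𝓞 F)) (ι : K →ₐ[F] AlgebraicClosure (v.adicCompletion F)),
      N ⊓ (restrictHom (k := v.adicCompletion F) ι).range ≤ H) : N ≤ H := by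
  let L := IntermediateField.fixedField H
  have hL : L.fixingSubgroup = H :=
    InfiniteGalois.fixingSubgroup_fixedField ⟨H, H.isClosed_of_isOpen hH⟩
  have : FiniteDimensional F L := (InfiniteGalois.isOpen_iff_finite L).mp (hL ▸ hH)
  have : IsGalois F L := (InfiniteGalois.normal_iff_isGalois L).mp (hL ▸ inferInstance)
  have : NumberField L := .of_module_finite F L
  have hker : (AlgEquiv.restrictNormalHom L : Gal(K/F) →* Gal(L/F)).ker = H :=
    (IntermediateField.restrictNormalHom_ker L).trans hL
  suffices hS : N.map (AlgEquiv.restrictNormalHom L) = ⊥ by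
    rwa [Subgroup.map_eq_bot_iff, hker] at hS
  refine eq_bot_of_forall_inf_range_restrictHom_eq_bot fun v ι ↦ ?_
  obtain ⟨ι, rfl⟩ := IsAlgClosed.surjective_domRestrict_of_isAlgebraic (E := K) ι
  rw [eq_bot_iff]
  rintro _ ⟨⟨g, hg, rfl⟩, γ, hγ⟩
  replace hγ : AlgEquiv.restrictNormalHom L (restrictHom ι γ) = AlgEquiv.restrictNormalHom L g :=
    (restrictNormalHom_restrictHom ι L γ).trans hγ
  have hH : g⁻¹ * restrictHom ι γ ∈ H := by
    rw [← hker, MonoidHom.mem_ker, map_mul, map_inv, hγ, inv_mul_cancel]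
  have hN : restrictHom ι γ ∈ N := (Subgroup.mul_mem_cancel_left N (inv_mem hg)).mp (hHN hH)
  rw [← hγ, Subgroup.mem_bot, ← MonoidHom.mem_ker, hker]
  exact h v ι ⟨hN, γ, rfl⟩

end LocalGlobal

section LocallyTrivial

open groupCohomology

variable {F K A : Type*} [Field F] [NumberField F] [Field K] [Algebra F K] [AddCommGroup A]
  [DistribMulAction Gal(K/F) A] {f : Gal(K/F) → A}

/-- A cochain on `Gal(K/F)` is locally trivial if it is a coboundary on the decomposition group of
every embedding of `K` into an algebraic closure of a completion of `F` at a finite place. A locally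
trivial cocycle represents a class in the Tate–Shafarevich group `Ш¹_F(A)`. -/
def IsLocallyTrivial [Normal F K] (f : Gal(K/F) → A) : Prop :=
  ∀ (v : HeightOneSpectrum (𝓞 F)) (ι : K →ₐ[F] AlgebraicClosure (v.adicCompletion F)),
    IsCoboundary₁ fun g : (restrictHom (k := v.adicCompletion F) ι).range ↦ f g

theorem eq_zero_of_isLocallyTrivial [IsGalois F K] (hf : IsCocycle₁ f) (hopen : IsOpen (f ⁻¹' {0}))
    (hloc : IsLocallyTrivial f) {N : Subgroup Gal(K/F)} [N.Normal] (hN : IsOpen (N : Set Gal(K/F)))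
    (hNA : ∀ γ ∈ N, ∀ x : A, γ • x = x) {γ : Gal(K/F)} (hγ : γ ∈ N) : f γ = 0 := by
  have := inf_cocycleZeros_normal hf hNA
  refine (le_of_forall_inf_range_restrictHom_le (H := N ⊓ cocycleZeros hf) (hN.inter hopen)
    inf_le_left (fun v ι g hg ↦ ⟨hg.1, mem_cocycleZeros.mpr ?_⟩) hγ).2
  obtain ⟨x, hx⟩ := hloc v ι
  exact (hx ⟨g, hg.2⟩).symm.trans (sub_eq_zero.mpr (hNA g hg.1 x))

end LocallyTrivial

section Arithmetic

/-- Choose `u ≡ 3` modulo the 2-part of `k` and `u ≡ 2` modulo its odd part, and let the cofactor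
`t` be `2 ^ D - 1`, respectively `3 ^ D - 1`, modulo these parts. -/
lemma exists_coprime_modEq_mul_pow_sub_one (D : ℕ) {k : ℕ} (hk : 0 < k) :
    ∃ u t : ℕ, u.Coprime k ∧
      (((2 ^ D - 1) * (3 ^ D - 1) : ℕ) : ℤ) ≡ t * ((u : ℤ) ^ D - 1) [ZMOD k] := by
  obtain ⟨m, r, hr, rfl⟩ := Nat.exists_eq_two_pow_mul_odd hk.ne'
  have hco : (2 ^ m).Coprime r := (Nat.coprime_two_left.mpr hr).pow_left m
  obtain ⟨u, hu2, hur⟩ := Nat.chineseRemainder hco 3 2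
  obtain ⟨t, ht2, htr⟩ := Nat.chineseRemainder hco (2 ^ D - 1) (3 ^ D - 1)
  have hu2' : u.Coprime (2 ^ m) := by
    rw [Nat.Coprime, hu2.gcd_eq]
    exact Nat.Coprime.pow_right m (by norm_num)
  have hur' : u.Coprime r := by
    rw [Nat.Coprime, hur.gcd_eq]
    exact Nat.coprime_two_left.mpr hr
  refine ⟨u, t, hu2'.mul_right hur', ?_⟩
  rw [← Int.natCast_modEq_iff] at hu2 hur ht2 htr
  have h3 : ((3 ^ D - 1 : ℕ) : ℤ) = (3 : ℕ) ^ D - 1 := by simp [Nat.one_le_pow]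
  have h2 : ((2 ^ D - 1 : ℕ) : ℤ) = (2 : ℕ) ^ D - 1 := by simp
  rw [Nat.cast_mul (2 ^ m), ← Int.modEq_and_modEq_iff_modEq_mul (by simpa using hco), Nat.cast_mul]
  constructor
  · rw [h3]
    exact (ht2.mul ((hu2.pow D).sub_right 1)).symm
  · rw [h2, mul_comm]
    exact (htr.mul ((hur.pow D).sub_right 1)).symm

lemma zsmul_eq_zsmul_of_modEq {A : Type*} [AddCommGroup A] {k : ℕ} {x : A} (hx : k • x = 0)
    {a b : ℤ} (h : a ≡ b [ZMOD k]) : a • x = b • x := by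
  obtain ⟨c, hc⟩ := h.dvd
  rw [eq_comm, ← sub_eq_zero, ← sub_smul, hc, mul_comm, mul_smul, natCast_zsmul, hx, smul_zero]

end Arithmetic

section Cyclotomic

variable (F K : Type*) [Field F] [Field K] [Algebra F K] (k : ℕ) [NeZero k]

/-- The kernel of the mod `k` cyclotomic character of `Gal(K/F)`. -/
noncomputable def cyclotomicKer : Subgroup Gal(K/F) :=
  ((modularCyclotomicCharacter' K k).comp (MulSemiringAction.toRingAut Gal(K/F) K)).ker

variable {F K k}

lemma mem_cyclotomicKer_iff {γ : Gal(K/F)} :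
    γ ∈ cyclotomicKer F K k ↔ ∀ z ∈ rootsOfUnity k K, γ (z : K) = z := by
  have hspec (σ : K ≃+* K) {z : Kˣ} (hz : z ∈ rootsOfUnity k K) :=
    modularCyclotomicCharacter'.spec' K k σ hz
  rw [cyclotomicKer, MonoidHom.mem_ker, MonoidHom.comp_apply]
  refine ⟨fun h z hz ↦ ?_, fun h ↦ ?_⟩
  · have hγ := hspec (MulSemiringAction.toRingAut Gal(K/F) K γ) hz
    rw [h, ← map_one (modularCyclotomicCharacter' K k), ← hspec 1 hz] at hγ
    exact hγ
  · rw [← map_one (modularCyclotomicCharacter' K k), eq_comm]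
    refine Units.ext (modularCyclotomicCharacter'.unique' K k _ fun z hz ↦ ?_)
    rw [← hspec 1 hz]
    exact h z hz

lemma commutator_mem_cyclotomicKer (σ τ : Gal(K/F)) :
    (σ * τ)⁻¹ * (τ * σ) ∈ cyclotomicKer F K k := by
  rw [cyclotomicKer, MonoidHom.mem_ker, map_mul, map_inv, map_mul, map_mul, mul_comm,
    mul_inv_eq_one, mul_comm]

instance cyclotomicKer_normal : (cyclotomicKer F K k).Normal := MonoidHom.normal_ker _

lemma isOpen_cyclotomicKer [Algebra.IsAlgebraic F K] :
    IsOpen (cyclotomicKer F K k : Set Gal(K/F)) := by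
  let S : Set K := Set.range fun z : rootsOfUnity k K ↦ ((z : Kˣ) : K)
  have : FiniteDimensional F (IntermediateField.adjoin F S) :=
    IntermediateField.finiteDimensional_adjoin fun x _ ↦ Algebra.IsIntegral.isIntegral x
  refine Subgroup.isOpen_mono (fun γ hγ ↦ mem_cyclotomicKer_iff.mpr fun z hz ↦ ?_)
    (IntermediateField.adjoin F S).fixingSubgroup_isOpen
  exact (IntermediateField.mem_fixingSubgroup_iff _ _).mp hγ _
    (IntermediateField.subset_adjoin F S ⟨⟨z, hz⟩, rfl⟩)

lemma exists_forall_rootsOfUnity_apply_eq_pow [CharZero K] [Normal ℚ K]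
    [HasEnoughRootsOfUnity K k] {u : ℕ} (hu : u.Coprime k) :
    ∃ σ : Gal(K/ℚ), ∀ z ∈ rootsOfUnity k K, σ (z : K) = z ^ u := by
  obtain ⟨ζ, hζ⟩ := HasEnoughRootsOfUnity.exists_primitiveRoot K k
  have hconj : IsConjRoot ℚ (ζ ^ u) ζ := by
    rw [IsConjRoot, ← Polynomial.cyclotomic_eq_minpoly_rat hζ (NeZero.pos k),
      ← Polynomial.cyclotomic_eq_minpoly_rat (hζ.pow_of_coprime u hu) (NeZero.pos k)]
  obtain ⟨σ, hσ⟩ := isConjRoot_iff_exists_algEquiv.mp hconj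
  refine ⟨σ, fun z hz ↦ ?_⟩
  obtain ⟨i, -, hi⟩ := hζ.eq_pow_of_pow_eq_one (show (z : K) ^ k = 1 from congrArg Units.val hz)
  rw [← hi, map_pow, hσ, pow_right_comm]

end Cyclotomic

section EmbeddingPermutations

/-- The permutation representation of the automorphisms of `K` on the embeddings `E →+* K`. -/
def embeddingPerm (E K : Type*) [Field E] [Field K] : (K ≃+* K) →* Equiv.Perm (E →+* K) where
  toFun σ :=
    { toFun := (σ : K →+* K).comp
      invFun := (σ.symm : K →+* K).comp
      left_inv φ := RingHom.ext fun x ↦ σ.symm_apply_apply (φ x)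
      right_inv φ := RingHom.ext fun x ↦ σ.apply_symm_apply (φ x) }
  map_one' := rfl
  map_mul' _ _ := rfl

variable {F K : Type*} [Field F] [Field K] [Algebra F K]

lemma pow_card_perm_apply (E : Type*) [Field E] (σ : K ≃+* K) (φ : E →+* K) (x : E) :
    (σ ^ Nat.card (Equiv.Perm (E →+* K))) (φ x) = φ x := by
  have h : embeddingPerm E K (σ ^ Nat.card (Equiv.Perm (E →+* K))) = 1 := by
    rw [map_pow, pow_card_eq_one']
  exact RingHom.congr_fun (Equiv.congr_fun h φ) x

lemma exists_mem_normalCore_eq_pow_card_perm (E : IntermediateField F K) (σ : K ≃+* K) :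
    ∃ τ ∈ E.fixingSubgroup.normalCore,
      ∀ x : K, τ x = (σ ^ Nat.card (Equiv.Perm (E →+* K))) x := by
  refine ⟨AlgEquiv.ofRingEquiv (f := σ ^ Nat.card (Equiv.Perm (E →+* K))) fun x ↦
    pow_card_perm_apply E σ (algebraMap E K) (algebraMap F E x), fun g ↦ ?_, fun x ↦ rfl⟩
  refine (IntermediateField.mem_fixingSubgroup_iff _ _).mpr fun x hx ↦ ?_
  have h := pow_card_perm_apply E σ (((g⁻¹ : Gal(K/F)) : K →+* K).comp (algebraMap E K)) ⟨x, hx⟩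
  exact (congrArg g h).trans (g.apply_symm_apply x)

lemma pow_apply_of_forall_rootsOfUnity {k u : ℕ} {σ : K ≃+* K}
    (hσ : ∀ z ∈ rootsOfUnity k K, σ (z : K) = z ^ u) (j : ℕ) {z : Kˣ} (hz : z ∈ rootsOfUnity k K) :
    (σ ^ j) (z : K) = z ^ u ^ j := by
  induction j with
  | zero => simp
  | succ j ih => rw [pow_succ, RingAut.mul_apply, hσ z hz, map_pow, ih, ← pow_mul, pow_succ]

lemma exists_mem_normalCore_forall_rootsOfUnity [CharZero K] [Normal ℚ K]
    (E : IntermediateField F K) {k u : ℕ} [NeZero k] [HasEnoughRootsOfUnity K k]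
    (hu : u.Coprime k) :
    ∃ τ ∈ E.fixingSubgroup.normalCore,
      ∀ z ∈ rootsOfUnity k K, τ (z : K) = z ^ u ^ Nat.card (Equiv.Perm (E →+* K)) := by
  obtain ⟨σ, hσ⟩ := exists_forall_rootsOfUnity_apply_eq_pow (K := K) hu
  obtain ⟨τ, hτE, hτ⟩ := exists_mem_normalCore_eq_pow_card_perm E σ.toRingEquiv
  exact ⟨τ, hτE, fun z hz ↦ (hτ z).trans (pow_apply_of_forall_rootsOfUnity hσ _ hz)⟩

lemma isOpen_normalCore_fixingSubgroup [IsGalois F K] (E : IntermediateField F K)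
    [FiniteDimensional F E] : IsOpen (E.fixingSubgroup.normalCore : Set Gal(K/F)) := by
  have : E.fixingSubgroup.FiniteIndex :=
    ⟨E.finrank_eq_fixingSubgroup_index (F := F) ▸ Module.finrank_pos.ne'⟩
  exact Subgroup.isOpen_of_isClosed_of_finiteIndex _
    (Subgroup.normalCore_isClosed _ E.fixingSubgroup_isClosed)

end EmbeddingPermutations

section CyclotomicModules

variable {F K A : Type*} [Field F] [Field K] [Algebra F K] [AddCommGroup A]
  [DistribMulAction Gal(K/F) A] {U : Subgroup Gal(K/F)} {k : ℕ}

/-- A Galois module `A` is cyclotomic of exponent `k` over `U ≤ Gal(K/F)` if it is killed by `k` and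
`U` acts on it through its action on `μ_k`. When `μ_k` is cyclic of order `k`, this says that `U`
acts on `A` by the mod `k` cyclotomic character. -/
structure IsCyclotomicOver (U : Subgroup Gal(K/F)) (k : ℕ) (A : Type*) [AddCommGroup A]
    [DistribMulAction Gal(K/F) A] : Prop where
  nsmul_eq_zero (x : A) : k • x = 0
  smul_eq_nsmul {γ : Gal(K/F)} (hγ : γ ∈ U) {m : ℕ}
    (hm : ∀ z ∈ rootsOfUnity k K, γ (z : K) = z ^ m) (x : A) : γ • x = m • x

lemma IsCyclotomicOver.of_injective {I : Type*} {e : A →+ (I → Additive (rootsOfUnity k K))}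
    (he : Function.Injective e)
    (hU : ∀ γ ∈ U, ∀ (x : A) (i : I),
      (((e (γ • x) i).toMul : Kˣ) : K) = γ (((e x i).toMul : Kˣ) : K)) :
    IsCyclotomicOver U k A where
  nsmul_eq_zero x := he <| funext fun i ↦ Additive.toMul.injective <| by
    rw [map_nsmul, map_zero]
    exact Subtype.ext (e x i).toMul.2
  smul_eq_nsmul {γ} hγ m hm x := he <| funext fun i ↦ Additive.toMul.injective <|
    Subtype.ext <| Units.ext <| by
      rw [hU γ hγ, hm _ (e x i).toMul.2, map_nsmul]
      simp

end CyclotomicModules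

section Main

open groupCohomology

variable {F K A : Type*} [Field F] [NumberField F] [Field K] [Algebra F K] [AddCommGroup A]
  [DistribMulAction Gal(K/F) A] (E : IntermediateField F K)

/-- `(2 ^ D - 1) (3 ^ D - 1)` for `D` the order of the group of permutations of the embeddings
`E →+* K`. It kills the Tate–Shafarevich groups of all the modules `T[k]`, for `T` a torus over `F`
split by `E`. -/
noncomputable def shaExponent : ℕ :=
  let D := Nat.card (Equiv.Perm (E →+* K))
  (2 ^ D - 1) * (3 ^ D - 1)

lemma shaExponent_pos [FiniteDimensional F E] [CharZero K] : 0 < shaExponent E := by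
  have : NumberField E := .of_module_finite F E
  have hD : Nat.card (Equiv.Perm (E →+* K)) ≠ 0 := Nat.card_pos.ne'
  exact Nat.mul_pos (Nat.sub_pos_of_lt (Nat.one_lt_pow hD one_lt_two))
    (Nat.sub_pos_of_lt (Nat.one_lt_pow hD (by norm_num)))

variable {E}

lemma exists_zsmul_eq_smul_sub_of_isLocallyTrivial [IsAlgClosure F K] [FiniteDimensional F E]
    {k : ℕ} [NeZero k] (hA : IsCyclotomicOver E.fixingSubgroup k A) {f : Gal(K/F) → A}
    (hf : IsCocycle₁ f) (hopen : IsOpen (f ⁻¹' {0})) (hloc : IsLocallyTrivial f) {u : ℕ}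
    (hu : u.Coprime k) :
    ∃ x : A, ∀ γ : Gal(K/F),
      ((u : ℤ) ^ Nat.card (Equiv.Perm (E →+* K)) - 1) • f γ = γ • x - x := by
  have : IsAlgClosed K := IsAlgClosure.isAlgClosed F
  have : CharZero K := charZero_of_injective_algebraMap (algebraMap F K).injective
  have : Algebra.IsAlgebraic ℚ K := .trans ℚ F K
  have : IsAlgClosure ℚ K := ⟨inferInstance, inferInstance⟩
  have : NeZero (k : K) := ⟨Nat.cast_ne_zero.mpr (NeZero.ne k)⟩
  obtain ⟨τ, hτE, hτ⟩ := exists_mem_normalCore_forall_rootsOfUnity E hu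
  let N := E.fixingSubgroup.normalCore ⊓ cyclotomicKer F K k
  have hNA : ∀ γ ∈ N, ∀ x : A, γ • x = x := fun γ hγ x ↦ by
    rw [hA.smul_eq_nsmul (Subgroup.normalCore_le _ hγ.1) (m := 1)
      (by simpa using mem_cyclotomicKer_iff.mp hγ.2), one_smul]
  have hfN : ∀ γ ∈ N, f γ = 0 := fun γ ↦ eq_zero_of_isLocallyTrivial hf hopen hloc
    ((isOpen_normalCore_fixingSubgroup E).inter isOpen_cyclotomicKer) hNA
  refine ⟨f τ, fun γ ↦ sub_one_zsmul_eq_of_commutator_mem hf hfN (fun x ↦ ?_)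
    ⟨?_, commutator_mem_cyclotomicKer τ γ⟩⟩
  · rw [hA.smul_eq_nsmul (Subgroup.normalCore_le _ hτE) hτ]
    exact_mod_cast (natCast_zsmul x _).symm
  · have hconj := (Subgroup.normalCore_normal _).conj_mem _ (inv_mem hτE) γ⁻¹
    simpa [mul_assoc] using mul_mem hconj hτE

theorem tate_shafarevich_of_torus_torsion_killed_uniformly_general [IsAlgClosure F K]
    [FiniteDimensional F E] {k : ℕ} (hk : 0 < k) (hA : IsCyclotomicOver E.fixingSubgroup k A)
    {f : Gal(K/F) → A} (hf : IsCocycle₁ f) (hopen : IsOpen (f ⁻¹' {0}))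
    (hloc : IsLocallyTrivial f) : IsCoboundary₁ (shaExponent E • f) := by
  have : NeZero k := ⟨hk.ne'⟩
  obtain ⟨u, t, hu, hut⟩ :=
    exists_coprime_modEq_mul_pow_sub_one (Nat.card (Equiv.Perm (E →+* K))) hk
  obtain ⟨x, hx⟩ := exists_zsmul_eq_smul_sub_of_isLocallyTrivial hA hf hopen hloc hu
  refine ⟨(t : ℤ) • x, fun γ ↦ ?_⟩
  rw [smul_comm γ, ← smul_sub, ← hx, smul_smul,
    ← zsmul_eq_zsmul_of_modEq (hA.nsmul_eq_zero _) hut, natCast_zsmul, Pi.smul_apply, shaExponent]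

end Main

/-- Let `F` be a number field and `T` a torus over `F` split by a finite
Galois extension `E/F`, say of dimension `n`, inside a fixed algebraic closure `K` of `F`
with absolute Galois group `Γ = Gal(K/F)` (with the Krull topology).  For a positive
integer `k`, the Galois module `A = T[k](K)` is a finite continuous `Γ`-module which,
as a module over `Gal(K/E)`, is isomorphic to `μ_k^n`.  Then there is a positive integer
`c = c(F, T)`, independent of `k`, killing the Tate–Shafarevich group
`Ш¹_F(T[k]) = ker(H¹(F, T[k]) → ∏_{𝔭 < ∞} H¹(F_𝔭, T[k]))`: every continuous 1-cocycle
`f : Γ → A` whose restriction along every embedding of local absolute Galois groups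
`Gal(F̄_𝔭/F_𝔭) → Γ` (for every finite place `𝔭`) is a coboundary becomes a coboundary
after multiplication by `c`. -/
theorem tate_shafarevich_of_torus_torsion_killed_uniformly
    (F : Type*) [Field F] [NumberField F]
    (K : Type*) [Field K] [Algebra F K] [IsAlgClosure F K]
    (E : IntermediateField F K) [FiniteDimensional F E] [IsGalois F E]
    (n : ℕ) :
    ∃ c : ℕ, 0 < c ∧
      ∀ (k : ℕ), 0 < k →
      ∀ (A : Type) [AddCommGroup A] [DistribMulAction (K ≃ₐ[F] K) A],
      -- the action of `Γ` on `A` is continuous (`A` discrete)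
      (∀ a : A, IsOpen {γ : K ≃ₐ[F] K | γ • a = a}) →
      -- over `E`, `A` is isomorphic to `μ_k^n = T_E[k]` compatibly with the action of
      -- `Gal(K/E)`
      (∃ e : A ≃+ (Fin n → Additive ↥(rootsOfUnity k K)),
        ∀ γ : K ≃ₐ[F] K, (∀ x : E, γ (x : K) = (x : K)) →
          ∀ (a : A) (ι : Fin n),
            (((Additive.toMul (e (γ • a) ι) : ↥(rootsOfUnity k K)) : Kˣ) : K) =
              γ (((Additive.toMul (e a ι) : ↥(rootsOfUnity k K)) : Kˣ) : K)) →
      ∀ f : (K ≃ₐ[F] K) → A,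
      -- `f` is a continuous 1-cocycle
      (∀ γ δ : K ≃ₐ[F] K, f (γ * δ) = f γ + γ • f δ) →
      (∀ a : A, IsOpen (f ⁻¹' {a})) →
      -- the class of `f` is locally trivial: for every finite place `𝔭` of `F` and every
      -- embedding `ι : K → F̄_𝔭` over `F`, the restriction of `f` along the induced map
      -- `ρ : Gal(F̄_𝔭/F_𝔭) → Γ` is a coboundary
      (∀ (v : HeightOneSpectrum (𝓞 F))
        (ι : K →+* AlgebraicClosure (v.adicCompletion F)),
        (∀ x : F, ι (algebraMap F K x) =
          algebraMap (v.adicCompletion F) (AlgebraicClosure (v.adicCompletion F))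
            (algebraMap F (v.adicCompletion F) x)) →
        ∀ ρ : (AlgebraicClosure (v.adicCompletion F) ≃ₐ[v.adicCompletion F]
            AlgebraicClosure (v.adicCompletion F)) →* (K ≃ₐ[F] K),
        (∀ γ (x : K), ι (ρ γ x) = γ (ι x)) →
        ∃ a : A, ∀ γ, f (ρ γ) = ρ γ • a - a) →
      -- then `c` kills the class of `f`
      ∃ a : A, ∀ γ : K ≃ₐ[F] K, c • f γ = γ • a - a := by
  have : CharZero K := charZero_of_injective_algebraMap (algebraMap F K).injective
  refine ⟨shaExponent E, shaExponent_pos E, fun k hk A _ _ _ ⟨e, he⟩ f hf hopen hloc ↦ ?_⟩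
  have hA : IsCyclotomicOver E.fixingSubgroup k A := .of_injective (e := e.toAddMonoidHom)
    e.injective fun γ hγ ↦ he γ fun x ↦ (IntermediateField.mem_fixingSubgroup_iff _ _).mp hγ x x.2
  have hlocal : IsLocallyTrivial f := fun v ι ↦ by
    obtain ⟨x, hx⟩ := hloc v ι.toRingHom
      (fun y ↦ (ι.commutes y).trans (IsScalarTower.algebraMap_apply F (v.adicCompletion F) _ y))
      (restrictHom ι) (apply_restrictHom ι)
    refine ⟨x, ?_⟩
    rintro ⟨_, γ, rfl⟩
    exact (hx γ).symm
  obtain ⟨x, hx⟩ := tate_shafarevich_of_torus_torsion_killed_uniformly_general hk hA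
    (fun γ δ ↦ (hf γ δ).trans (add_comm _ _)) (hopen 0) hlocal
  exact ⟨x, fun γ ↦ (hx γ).symm⟩
end

section
/- Let F be a number field and k a positive integer. If x ∈ F^× satisfies x ∈ (F_𝔭^×)^{2k} for every finite place 𝔭 of F, then x² ∈ (F^×)^{2k}; consequently there exists y ∈ F^× with x = y^k or x = −y^k. -/
open IsDedekindDomain NumberField

/-!
For almost all primes `𝔭` of `F`, the local hypothesis says that `x` is an `m`-th power modulo `𝔭`.

If `F` contains a primitive `m`-th root of unity, this makes almost all primes split completely in
`L = F(x^{1/m})`. Were `L ≠ F`, each of them would have two primes of `L` above it, so that outside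
finitely many Euler factors `ζ_F(s)² ≤ ζ_L(s)` for `s > 1`; this is absurd as `s → 1⁺`, because both
zeta functions have a simple pole at `1`. Hence `x` is an `m`-th power in `F`.

For `m = p^r` it follows that `x = α^m` with `α` in the cyclotomic field `K = F(ζ_m)`, and one
descends to `F`. If `Gal(K/F)` is cyclic with generator `τ : ζ ↦ ζ^{t+1}`, where `4 ∣ t` in case
`p = 2`, then `α` can be multiplied by a power of `ζ` to become `τ`-invariant, by lifting the
exponent if `p ∣ t` and trivially if `p ∤ t`; so `x` is an `m`-th power. Otherwise `p = 2` and some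
`τ : ζ ↦ ζ^{t+1}` has `4 ∤ t`; as `Gal(K/F)` is abelian, `α^{t+1} / τα` lies in `F`, so `x^t` is an
`m`-th power there, and hence so is `x²`.
-/

open Filter Topology
open scoped ENNReal Pointwise

section PartialZeta

variable {K : Type*} [Field K] [NumberField K]

/-- The term `N(I)^{-s}` of the Dedekind zeta function. It takes values in `ℝ≥0∞` so that sums over
sets of ideals need no summability proofs; the zero ideal has weight `0` when `s ≠ 0`. -/
noncomputable def idealWeight (s : ℝ) (I : Ideal (𝓞 K)) : ℝ≥0∞ :=
  ENNReal.ofReal ((Ideal.absNorm I : ℝ) ^ (-s))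

variable (K) in
/-- The Dedekind zeta function of `K` at a real argument, as a sum over ideals that is `⊤` where it
diverges. -/
noncomputable def idealZeta (s : ℝ) : ℝ≥0∞ :=
  ∑' I : Ideal (𝓞 K), idealWeight s I

/-- The part of the Dedekind zeta function of `K` that is contributed by the ideals in `S`. -/
noncomputable def partialZeta (S : Set (Ideal (𝓞 K))) (s : ℝ) : ℝ≥0∞ :=
  ∑' I : S, idealWeight s (I : Ideal (𝓞 K))

/-- The nonzero ideals that are divisible by no member of `T`. -/
def primeTo (T : Finset (Ideal (𝓞 K))) : Set (Ideal (𝓞 K)) :=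
  {I | I ≠ ⊥ ∧ ∀ P ∈ T, ¬ P ∣ I}

theorem idealWeight_mul (s : ℝ) (I J : Ideal (𝓞 K)) :
    idealWeight s (I * J) = idealWeight s I * idealWeight s J := by
  rw [idealWeight, idealWeight, idealWeight, ← ENNReal.ofReal_mul (by positivity), map_mul,
    Nat.cast_mul, Real.mul_rpow (by positivity) (by positivity)]

theorem idealWeight_bot {s : ℝ} (hs : s ≠ 0) : idealWeight s (⊥ : Ideal (𝓞 K)) = 0 := by
  simp [idealWeight, Real.zero_rpow (neg_ne_zero.mpr hs)]

theorem idealWeight_le_inv_two {s : ℝ} (hs : 1 ≤ s) {I : Ideal (𝓞 K)} (hI : I ≠ ⊥)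
    (hI' : I ≠ ⊤) : idealWeight s I ≤ 2⁻¹ := by
  have h0 : Ideal.absNorm I ≠ 0 := Ideal.absNorm_eq_zero_iff.not.mpr hI
  have h1 : Ideal.absNorm I ≠ 1 := Ideal.absNorm_eq_one_iff.not.mpr hI'
  have h2 : (2 : ℝ) ≤ Ideal.absNorm I := by
    exact_mod_cast (by lia : 2 ≤ Ideal.absNorm I)
  rw [← ENNReal.ofReal_ofNat 2, ← ENNReal.ofReal_inv_of_pos two_pos]
  refine ENNReal.ofReal_le_ofReal ?_
  calc (Ideal.absNorm I : ℝ) ^ (-s) ≤ (Ideal.absNorm I : ℝ) ^ (-1 : ℝ) :=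
        Real.rpow_le_rpow_of_exponent_le (by linarith) (by linarith)
    _ = (Ideal.absNorm I : ℝ)⁻¹ := Real.rpow_neg_one _
    _ ≤ 2⁻¹ := by gcongr

theorem partialZeta_mono {S T : Set (Ideal (𝓞 K))} (h : S ⊆ T) (s : ℝ) :
    partialZeta S s ≤ partialZeta T s :=
  ENNReal.tsum_mono_subtype _ h

theorem partialZeta_le_idealZeta (S : Set (Ideal (𝓞 K))) (s : ℝ) :
    partialZeta S s ≤ idealZeta K s :=
  ENNReal.tsum_comp_le_tsum_of_injective Subtype.val_injective _

theorem partialZeta_image_mul_left {P : Ideal (𝓞 K)} (hP : P ≠ ⊥) (S : Set (Ideal (𝓞 K)))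
    (s : ℝ) : partialZeta ((P * ·) '' S) s = idealWeight s P * partialZeta S s := by
  rw [partialZeta, tsum_image (idealWeight s) (mul_right_injective₀ hP).injOn]
  simp only [idealWeight_mul, ENNReal.tsum_mul_left, partialZeta]

theorem partialZeta_primeTo_le_two_mul [DecidableEq (Ideal (𝓞 K))] {s : ℝ} (hs : 1 ≤ s)
    {T : Finset (Ideal (𝓞 K))} (hT : partialZeta (primeTo T) s ≠ ⊤) {P : Ideal (𝓞 K)}
    (hP : P ≠ ⊥) (hP' : P ≠ ⊤) :
    partialZeta (primeTo T) s ≤ 2 * partialZeta (primeTo (insert P T)) s := by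
  have hcover : primeTo T ⊆ primeTo (insert P T) ∪ (P * ·) '' primeTo T := by
    rintro I ⟨hI, hIT⟩
    by_cases hPI : P ∣ I
    · obtain ⟨J, rfl⟩ := hPI
      exact .inr ⟨J, ⟨right_ne_zero_of_mul hI, fun Q hQ hJ => hIT Q hQ (hJ.mul_left P)⟩, rfl⟩
    · exact .inl ⟨hI, Finset.forall_mem_insert _ _ _ |>.mpr ⟨hPI, hIT⟩⟩
  set Z := partialZeta (primeTo T) s
  set Z' := partialZeta (primeTo (insert P T)) s
  have hle : Z ≤ Z' + 2⁻¹ * Z :=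
    calc Z ≤ partialZeta (primeTo (insert P T) ∪ (P * ·) '' primeTo T) s :=
          partialZeta_mono hcover s
      _ ≤ Z' + partialZeta ((P * ·) '' primeTo T) s := ENNReal.tsum_union_le (idealWeight s) _ _
      _ = Z' + idealWeight s P * Z := by rw [partialZeta_image_mul_left hP]
      _ ≤ Z' + 2⁻¹ * Z := by gcongr; exact idealWeight_le_inv_two hs hP hP'
  have hhalf : 2⁻¹ * Z ≤ Z' := by
    refine ENNReal.le_of_add_le_add_right (a := 2⁻¹ * Z) (ENNReal.mul_ne_top (by simp) hT) ?_
    rwa [← add_mul, ENNReal.inv_two_add_inv_two, one_mul]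
  calc Z = 2 * (2⁻¹ * Z) := by
        rw [← mul_assoc, ENNReal.mul_inv_cancel two_ne_zero ENNReal.ofNat_ne_top, one_mul]
    _ ≤ 2 * Z' := by gcongr

theorem partialZeta_primeTo_empty {s : ℝ} (hs : s ≠ 0) :
    partialZeta (primeTo (∅ : Finset (Ideal (𝓞 K)))) s = idealZeta K s := by
  refine tsum_subtype_eq_of_support_subset fun I hI => ⟨?_, by simp⟩
  rintro rfl
  exact hI (idealWeight_bot hs)

theorem idealZeta_le_two_pow_mul {s : ℝ} (hs : 1 ≤ s) (hfin : idealZeta K s ≠ ⊤)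
    (T : Finset (Ideal (𝓞 K))) (hT : ∀ P ∈ T, P ≠ ⊥ ∧ P ≠ ⊤) :
    idealZeta K s ≤ 2 ^ T.card * partialZeta (primeTo T) s := by
  classical
  induction T using Finset.induction_on with
  | empty => rw [partialZeta_primeTo_empty (by linarith), Finset.card_empty, pow_zero, one_mul]
  | insert P T hPT ih =>
    rw [Finset.forall_mem_insert] at hT
    calc idealZeta K s ≤ 2 ^ T.card * partialZeta (primeTo T) s := ih hT.2
      _ ≤ 2 ^ T.card * (2 * partialZeta (primeTo (insert P T)) s) := by
        gcongr
        exact partialZeta_primeTo_le_two_mul hs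
          (ne_top_of_le_ne_top hfin (partialZeta_le_idealZeta _ s)) hT.1.1 hT.1.2
      _ = 2 ^ (insert P T).card * partialZeta (primeTo (insert P T)) s := by
        rw [Finset.card_insert_of_notMem hPT, pow_succ, mul_assoc]

theorem tsum_idealWeight_of_absNorm_eq (s : ℝ) (n : ℕ) :
    ∑' I : {I : Ideal (𝓞 K) // Ideal.absNorm I = n}, idealWeight s (I : Ideal (𝓞 K)) =
      ENNReal.ofReal
        ((Nat.card {I : Ideal (𝓞 K) // Ideal.absNorm I = n} : ℝ) * (n : ℝ) ^ (-s)) := by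
  have hconst (I : {I : Ideal (𝓞 K) // Ideal.absNorm I = n}) :
      idealWeight s (I : Ideal (𝓞 K)) = ENNReal.ofReal ((n : ℝ) ^ (-s)) := by
    rw [idealWeight, I.2]
  have : Finite {I : Ideal (𝓞 K) // Ideal.absNorm I = n} :=
    (Ideal.finite_setOfPred_absNorm_eq n).to_subtype
  rw [tsum_congr hconst, ENNReal.tsum_const, ENat.card_eq_coe_natCard,
    ENNReal.ofReal_mul (by positivity), ENNReal.ofReal_natCast, ENat.toENNReal_coe]

theorem idealZeta_eq_tsum_natCard (s : ℝ) :
    idealZeta K s = ∑' n : ℕ, ENNReal.ofReal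
      ((Nat.card {I : Ideal (𝓞 K) // Ideal.absNorm I = n} : ℝ) * (n : ℝ) ^ (-s)) := by
  rw [idealZeta, ← (Equiv.sigmaFiberEquiv (Ideal.absNorm : Ideal (𝓞 K) → ℕ)).tsum_eq,
    ENNReal.tsum_sigma']
  exact tsum_congr (tsum_idealWeight_of_absNorm_eq s)

theorem idealZeta_eq_dedekindZeta {s : ℝ} (hs : s ≠ 0) (h : dedekindZeta K s ≠ 0) :
    idealZeta K s ≠ ⊤ ∧ ((idealZeta K s).toReal : ℂ) = dedekindZeta K s := by
  set g : ℕ → ℝ := fun n =>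
    (Nat.card {I : Ideal (𝓞 K) // Ideal.absNorm I = n} : ℝ) * (n : ℝ) ^ (-s) with hg
  have hg0 (n : ℕ) : 0 ≤ g n := by positivity
  have hterm : LSeries.term
      (fun n ↦ (Nat.card {I : Ideal (𝓞 K) // Ideal.absNorm I = n} : ℂ)) s = fun n => (g n : ℂ) := by
    funext n
    rcases eq_or_ne n 0 with rfl | hn
    · simp [hg, Real.zero_rpow (neg_ne_zero.mpr hs)]
    · rw [LSeries.term_of_ne_zero hn, hg, Complex.ofReal_mul, Complex.ofReal_natCast,
        Complex.ofReal_cpow (by positivity), Complex.ofReal_natCast, Complex.ofReal_neg,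
        Complex.cpow_neg, div_eq_mul_inv]
  -- A Dirichlet series that is not summable has the junk value `0`.
  have hsum : Summable g := by
    have hls : LSeriesSummable _ _ := not_imp_comm.mp (LSeries.eq_zero_of_not_LSeriesSummable _ _) h
    rwa [LSeriesSummable, hterm, Complex.summable_ofReal] at hls
  rw [idealZeta_eq_tsum_natCard, ← ENNReal.ofReal_tsum_of_nonneg hg0 hsum]
  refine ⟨ENNReal.ofReal_ne_top, ?_⟩
  rw [ENNReal.toReal_ofReal (tsum_nonneg hg0), dedekindZeta, LSeries, hterm, Complex.ofReal_tsum]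

variable (K) in
theorem eventually_idealZeta_eq_dedekindZeta :
    ∀ᶠ s : ℝ in 𝓝[>] 1, idealZeta K s ≠ ⊤ ∧
      ((idealZeta K s).toReal : ℂ) = dedekindZeta K s := by
  have hne := (tendsto_sub_one_mul_dedekindZeta_nhdsGT K).eventually_ne
    (Complex.ofReal_ne_zero.mpr (dedekindZeta_residue_ne_zero K))
  filter_upwards [hne, self_mem_nhdsWithin] with s hs hs1
  exact idealZeta_eq_dedekindZeta (zero_lt_one.trans hs1).ne' (right_ne_zero_of_mul hs)

variable (K) in
theorem tendsto_sub_one_mul_idealZeta :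
    Tendsto (fun s : ℝ => (s - 1) * (idealZeta K s).toReal) (𝓝[>] 1)
      (𝓝 (dedekindZeta_residue K)) := by
  refine ((Complex.continuous_re.tendsto _).comp
    (tendsto_sub_one_mul_dedekindZeta_nhdsGT K)).congr' ?_
  filter_upwards [eventually_idealZeta_eq_dedekindZeta K] with s hs
  rw [Function.comp_apply, ← hs.2, ← Complex.ofReal_one, ← Complex.ofReal_sub,
    ← Complex.ofReal_mul, Complex.ofReal_re]

variable {L : Type*} [Field L] [NumberField L]

-- The left-hand side has a simple pole at `1`, the square on the right a double one.
theorem exists_idealZeta_lt_sq (T : Finset (Ideal (𝓞 K))) (hT : ∀ P ∈ T, P ≠ ⊥ ∧ P ≠ ⊤) :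
    ∃ s : ℝ, idealZeta L s < partialZeta (primeTo T) s ^ 2 := by
  by_contra! hle
  have hev : ∀ᶠ s : ℝ in 𝓝[>] 1,
      ((s - 1) * (idealZeta K s).toReal) ^ 2 ≤
        (2 ^ T.card) ^ 2 * ((s - 1) * ((s - 1) * (idealZeta L s).toReal)) := by
    filter_upwards [eventually_idealZeta_eq_dedekindZeta K,
      eventually_idealZeta_eq_dedekindZeta L, self_mem_nhdsWithin] with s hKs hLs hs
    have hs1 : 1 ≤ s := le_of_lt hs
    have hsq : idealZeta K s ^ 2 ≤ (2 ^ T.card) ^ 2 * idealZeta L s :=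
      calc _ ≤ (2 ^ T.card * partialZeta (primeTo T) s) ^ 2 := by
            gcongr
            exact idealZeta_le_two_pow_mul hs1 hKs.1 T hT
        _ = (2 ^ T.card) ^ 2 * partialZeta (primeTo T) s ^ 2 := mul_pow _ _ _
        _ ≤ _ := by gcongr; exact hle s
    have hreal := ENNReal.toReal_mono (ENNReal.mul_ne_top (by finiteness) hLs.1) hsq
    simp only [ENNReal.toReal_mul, ENNReal.toReal_pow, ENNReal.toReal_ofNat] at hreal
    calc _ = (s - 1) ^ 2 * (idealZeta K s).toReal ^ 2 :=
          mul_pow _ _ _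
      _ ≤ (s - 1) ^ 2 * _ := mul_le_mul_of_nonneg_left hreal (sq_nonneg _)
      _ = _ := by ring
  have hzero : Tendsto (fun s : ℝ => s - 1) (𝓝[>] 1) (𝓝 0) :=
    tendsto_nhdsWithin_of_tendsto_nhds (by simpa using (continuous_sub_right (1 : ℝ)).tendsto 1)
  have hlim := le_of_tendsto_of_tendsto ((tendsto_sub_one_mul_idealZeta K).pow 2)
    ((hzero.mul (tendsto_sub_one_mul_idealZeta L)).const_mul _) hev
  rw [zero_mul, mul_zero] at hlim
  exact hlim.not_gt (pow_pos (dedekindZeta_residue_pos K) 2)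

end PartialZeta

section Pushforward

open UniqueFactorizationMonoid

theorem multiset_map_filter_map_add_map {α β : Type*} [DecidableEq β] {q₀ q₁ : α → β} {c : β → α}
    {s t : Multiset α} (hs : ∀ a ∈ s, c (q₀ a) = a) (ht : ∀ a ∈ t, c (q₁ a) = a)
    (hne : ∀ a ∈ t, q₀ a ≠ q₁ a) :
    ((s.map q₀ + t.map q₁).filter fun b => q₀ (c b) = b).map c = s ∧
      ((s.map q₀ + t.map q₁).filter fun b => ¬ q₀ (c b) = b).map c = t := by
  have hs' : ∀ b ∈ s.map q₀, q₀ (c b) = b :=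
    Multiset.forall_mem_map_iff.mpr fun a ha => congrArg q₀ (hs a ha)
  have ht' : ∀ b ∈ t.map q₁, ¬ q₀ (c b) = b :=
    Multiset.forall_mem_map_iff.mpr fun a ha => by rw [ht a ha]; exact hne a ha
  rw [Multiset.filter_add, Multiset.filter_add, Multiset.filter_eq_self.mpr hs',
    Multiset.filter_eq_nil.mpr ht', Multiset.filter_eq_self.mpr ht',
    Multiset.filter_eq_nil.mpr fun b hb => not_not_intro (hs' b hb), add_zero, zero_add,
    Multiset.map_map, Multiset.map_map]
  exact ⟨(Multiset.map_congr rfl hs).trans (Multiset.map_id s),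
    (Multiset.map_congr rfl ht).trans (Multiset.map_id t)⟩

/-- The multiplicative extension to nonzero ideals of a map `q` that is given on prime ideals. -/
noncomputable def idealPush {R S : Type*} [CommRing R] [IsDedekindDomain R] [CommRing S]
    (q : Ideal R → Ideal S) (I : Ideal R) : Ideal S :=
  ((normalizedFactors I).map q).prod

theorem normalizedFactors_idealPush {R S : Type*} [CommRing R] [IsDedekindDomain R] [CommRing S]
    [IsDedekindDomain S] {q : Ideal R → Ideal S} {I : Ideal R}
    (hq : ∀ P ∈ normalizedFactors I, Prime (q P)) :
    normalizedFactors (idealPush q I) = (normalizedFactors I).map q :=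
  normalizedFactors_prod_of_prime (Multiset.forall_mem_map_iff.mpr hq)

variable {K L : Type*} [Field K] [NumberField K] [Field L] [NumberField L]

theorem absNorm_idealPush {q : Ideal (𝓞 K) → Ideal (𝓞 L)} {I : Ideal (𝓞 K)} (hI : I ≠ ⊥)
    (hq : ∀ P ∈ normalizedFactors I, Ideal.absNorm (q P) = Ideal.absNorm P) :
    Ideal.absNorm (idealPush q I) = Ideal.absNorm I := by
  conv_rhs => rw [← Ideal.prod_normalizedFactors_eq_self hI]
  rw [idealPush, map_multiset_prod, map_multiset_prod, Multiset.map_map]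
  exact congrArg _ (Multiset.map_congr rfl hq)

theorem prime_and_notMem_of_mem_primeTo {T : Finset (Ideal (𝓞 K))} {I P : Ideal (𝓞 K)}
    (hI : I ∈ primeTo T) (hP : P ∈ normalizedFactors I) : Prime P ∧ P ∉ T :=
  ⟨prime_of_normalized_factor P hP, fun hPT => hI.2 P hPT (dvd_of_mem_normalizedFactors hP)⟩

variable [Algebra K L]

variable (L) in
/-- The prime ideals of `𝓞 L` over `P` whose residue degree is `1`. -/
def degreeOnePrimesOver (P : Ideal (𝓞 K)) : Set (Ideal (𝓞 L)) :=
  {Q | Q.IsPrime ∧ Q.under (𝓞 K) = P ∧ Ideal.absNorm Q = Ideal.absNorm P}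

theorem prime_of_mem_degreeOnePrimesOver {P : Ideal (𝓞 K)} {Q : Ideal (𝓞 L)} (hP : Prime P)
    (hQ : Q ∈ degreeOnePrimesOver L P) : Prime Q := by
  refine Ideal.prime_of_isPrime ?_ hQ.1
  rw [Ne, ← Ideal.absNorm_eq_zero_iff, hQ.2.2, Ideal.absNorm_eq_zero_iff]
  exact hP.ne_zero

variable {T : Finset (Ideal (𝓞 K))} {q₀ q₁ : Ideal (𝓞 K) → Ideal (𝓞 L)}
  (h₀ : ∀ P, Prime P ∧ P ∉ T → q₀ P ∈ degreeOnePrimesOver L P)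
  (h₁ : ∀ P, Prime P ∧ P ∉ T → q₁ P ∈ degreeOnePrimesOver L P)

include h₀ in
theorem normalizedFactors_idealPush_of_mem_primeTo {I : Ideal (𝓞 K)} (hI : I ∈ primeTo T) :
    normalizedFactors (idealPush q₀ I) = (normalizedFactors I).map q₀ :=
  normalizedFactors_idealPush fun P hP =>
    have hP' := prime_and_notMem_of_mem_primeTo hI hP
    prime_of_mem_degreeOnePrimesOver hP'.1 (h₀ P hP')

include h₀ in
theorem absNorm_idealPush_of_mem_primeTo {I : Ideal (𝓞 K)} (hI : I ∈ primeTo T) :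
    Ideal.absNorm (idealPush q₀ I) = Ideal.absNorm I :=
  absNorm_idealPush hI.1 fun P hP => (h₀ P (prime_and_notMem_of_mem_primeTo hI hP)).2.2

include h₀ in
theorem idealPush_ne_zero_of_mem_primeTo {I : Ideal (𝓞 K)} (hI : I ∈ primeTo T) :
    idealPush q₀ I ≠ 0 := by
  rw [Ne, Ideal.zero_eq_bot, ← Ideal.absNorm_eq_zero_iff, absNorm_idealPush_of_mem_primeTo h₀ hI,
    Ideal.absNorm_eq_zero_iff]
  exact hI.1

include h₀ h₁ in
theorem injective_idealPush_mul_idealPush (hne : ∀ P, Prime P ∧ P ∉ T → q₀ P ≠ q₁ P) :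
    Function.Injective fun x : primeTo T × primeTo T =>
      idealPush q₀ (x.1 : Ideal (𝓞 K)) * idealPush q₁ (x.2 : Ideal (𝓞 K)) := by
  classical
  have hrec {I J : Ideal (𝓞 K)} (hI : I ∈ primeTo T) (hJ : J ∈ primeTo T) :=
    multiset_map_filter_map_add_map (q₀ := q₀) (q₁ := q₁) (c := Ideal.under (𝓞 K))
      (fun P hP => (h₀ P (prime_and_notMem_of_mem_primeTo hI hP)).2.1)
      (fun P hP => (h₁ P (prime_and_notMem_of_mem_primeTo hJ hP)).2.1)
      (fun P hP => hne P (prime_and_notMem_of_mem_primeTo hJ hP))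
  have hnf {I J : Ideal (𝓞 K)} (hI : I ∈ primeTo T) (hJ : J ∈ primeTo T) :
      normalizedFactors (idealPush q₀ I * idealPush q₁ J) =
        (normalizedFactors I).map q₀ + (normalizedFactors J).map q₁ := by
    rw [normalizedFactors_mul (idealPush_ne_zero_of_mem_primeTo h₀ hI)
      (idealPush_ne_zero_of_mem_primeTo h₁ hJ), normalizedFactors_idealPush_of_mem_primeTo h₀ hI,
      normalizedFactors_idealPush_of_mem_primeTo h₁ hJ]
  rintro ⟨⟨I, hI⟩, J, hJ⟩ ⟨⟨I', hI'⟩, J', hJ'⟩ h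
  have hsum := congrArg normalizedFactors h
  simp only [hnf hI hJ, hnf hI' hJ'] at hsum
  have hII' : normalizedFactors I = normalizedFactors I' := by
    rw [← (hrec hI hJ).1, hsum, (hrec hI' hJ').1]
  have hJJ' : normalizedFactors J = normalizedFactors J' := by
    rw [← (hrec hI hJ).2, hsum, (hrec hI' hJ').2]
  rw [Prod.mk.injEq, Subtype.mk.injEq, Subtype.mk.injEq,
    ← Ideal.prod_normalizedFactors_eq_self hI.1, hII', Ideal.prod_normalizedFactors_eq_self hI'.1,
    ← Ideal.prod_normalizedFactors_eq_self hJ.1, hJJ', Ideal.prod_normalizedFactors_eq_self hJ'.1]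
  exact ⟨rfl, rfl⟩

include h₀ h₁ in
theorem sq_partialZeta_primeTo_le_idealZeta (hne : ∀ P, Prime P ∧ P ∉ T → q₀ P ≠ q₁ P) (s : ℝ) :
    partialZeta (primeTo T) s ^ 2 ≤ idealZeta L s :=
  calc partialZeta (primeTo T) s ^ 2
      = ∑' x : primeTo T × primeTo T, idealWeight s (x.1 : Ideal (𝓞 K)) *
          idealWeight s (x.2 : Ideal (𝓞 K)) := by
        rw [ENNReal.tsum_prod', sq, partialZeta]
        simp only [ENNReal.tsum_mul_left, ENNReal.tsum_mul_right]
    _ = ∑' x : primeTo T × primeTo T, idealWeight s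
          (idealPush q₀ (x.1 : Ideal (𝓞 K)) * idealPush q₁ (x.2 : Ideal (𝓞 K))) := by
        refine tsum_congr fun x => ?_
        rw [idealWeight_mul, idealWeight, idealWeight, idealWeight, idealWeight,
          absNorm_idealPush_of_mem_primeTo h₀ x.1.2, absNorm_idealPush_of_mem_primeTo h₁ x.2.2]
    _ ≤ idealZeta L s :=
        ENNReal.tsum_comp_le_tsum_of_injective (injective_idealPush_mul_idealPush h₀ h₁ hne) _

variable (K L) in
theorem frequently_subsingleton_degreeOnePrimesOver :
    ∃ᶠ v : HeightOneSpectrum (𝓞 K) in cofinite, (degreeOnePrimesOver L v.asIdeal).Subsingleton := by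
  intro hev
  let T : Finset (Ideal (𝓞 K)) := (hev : Set.Finite _).toFinset.image HeightOneSpectrum.asIdeal
  have hT : ∀ P ∈ T, P ≠ ⊥ ∧ P ≠ ⊤ :=
    Finset.forall_mem_image.mpr fun v _ => ⟨v.ne_bot, v.isPrime.ne_top⟩
  have hpair : ∀ P : Ideal (𝓞 K), Prime P ∧ P ∉ T →
      ∃ Q₀ ∈ degreeOnePrimesOver L P, ∃ Q₁ ∈ degreeOnePrimesOver L P, Q₀ ≠ Q₁ := by
    rintro P ⟨hP, hPT⟩
    have hP' : ¬ (degreeOnePrimesOver L P).Subsingleton := by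
      contrapose! hPT
      exact Finset.mem_image.mpr
        ⟨⟨P, Ideal.isPrime_of_prime hP, hP.ne_zero⟩, by simpa using hPT, rfl⟩
    exact Set.not_subsingleton_iff.mp hP'
  choose! q₀ h₀ q₁ h₁ hne using hpair
  obtain ⟨s, hs⟩ := exists_idealZeta_lt_sq (L := L) T hT
  exact hs.not_ge (sq_partialZeta_primeTo_le_idealZeta h₀ h₁ hne s)

end Pushforward

section Kummer

/-- `x` is an `m`-th power modulo all but finitely many nonzero primes: the only trace of the local
condition that the argument needs. -/
def IsPowModAlmostAll {R : Type*} [CommRing R] (m : ℕ) (x : R) : Prop :=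
  ∀ᶠ v : HeightOneSpectrum R in cofinite, ∃ c, x - c ^ m ∈ v.asIdeal

theorem isPrimitiveRoot_map_of_natCast_ne_zero {R S : Type*} [CommRing R] [IsDomain R] [CommRing S]
    [IsDomain S] {ζ : R} {m : ℕ} (hζ : IsPrimitiveRoot ζ m) (f : R →+* S) (hm : (m : S) ≠ 0) :
    IsPrimitiveRoot (f ζ) m := by
  have : NeZero (m : S) := ⟨hm⟩
  have hpos : 0 < m := NeZero.pos_of_neZero_natCast S
  rw [← Polynomial.isRoot_cyclotomic_iff, ← Polynomial.map_cyclotomic m f]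
  exact (hζ.isRoot_cyclotomic hpos).map

theorem exists_eq_pow_mul_of_pow_eq_pow {R : Type*} [CommRing R] [IsDomain R] {ζ x y : R} {m : ℕ}
    (hm : 0 < m) (hζ : IsPrimitiveRoot ζ m) (h : x ^ m = y ^ m) : ∃ i : ℕ, x = ζ ^ i * y := by
  have hx : x ∈ Polynomial.nthRoots m (y ^ m) := (Polynomial.mem_nthRoots hm).mpr h
  rw [hζ.nthRoots_eq rfl, Multiset.mem_map] at hx
  obtain ⟨i, -, hi⟩ := hx
  exact ⟨i, hi.symm⟩

theorem smul_eq_self_of_mem_stabilizer {S G : Type*} [CommRing S] [IsDomain S] [Group G]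
    [MulSemiringAction G S] {σ : G} {ζ α c : S} {m : ℕ} (hζ : IsPrimitiveRoot ζ m)
    (hσζ : σ • ζ = ζ) (hσc : σ • c = c) (hσα : σ • α ^ m = α ^ m) {Q : Ideal S} [Q.IsPrime]
    (hσQ : σ ∈ MulAction.stabilizer G Q) (hm : (m : S) ∉ Q) (hα : α ∉ Q)
    (hc : α ^ m - c ^ m ∈ Q) : σ • α = α := by
  have hm0 : 0 < m := Nat.pos_of_ne_zero fun h => hm (by rw [h, Nat.cast_zero]; exact Q.zero_mem)
  have hζQ : IsPrimitiveRoot (Ideal.Quotient.mk Q ζ) m :=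
    isPrimitiveRoot_map_of_natCast_ne_zero hζ _ <| by
      rwa [← map_natCast (Ideal.Quotient.mk Q), Ne, Ideal.Quotient.eq_zero_iff_mem]
  obtain ⟨i, hi⟩ : ∃ i : ℕ, α - ζ ^ i * c ∈ Q := by
    rw [← Ideal.Quotient.eq, map_pow, map_pow] at hc
    obtain ⟨i, hi⟩ := exists_eq_pow_mul_of_pow_eq_pow hm0 hζQ hc
    exact ⟨i, Ideal.Quotient.eq.mp (by rw [hi, map_mul, map_pow])⟩
  have hσi : σ • α - ζ ^ i * c ∈ Q := by
    have hmem := Ideal.smul_mem_pointwise_smul σ _ Q hi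
    rwa [smul_sub, smul_mul', smul_pow', hσζ, hσc, hσQ] at hmem
  obtain ⟨j, hj⟩ : ∃ j : ℕ, σ • α = ζ ^ j * α :=
    exists_eq_pow_mul_of_pow_eq_pow hm0 hζ (by rw [← smul_pow', hσα])
  have hjα : (ζ ^ j - 1) * α ∈ Q := by
    convert Q.sub_mem hσi hi using 1
    rw [hj]
    ring
  have hj1 : Ideal.Quotient.mk Q ζ ^ j = 1 := by
    rw [← map_pow, ← map_one (Ideal.Quotient.mk Q), Ideal.Quotient.eq]
    exact (Ideal.IsPrime.mem_or_mem ‹_› hjα).resolve_right hα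
  rw [hj, (hζ.pow_eq_one_iff_dvd j).mpr ((hζQ.pow_eq_one_iff_dvd j).mp hj1), one_mul]

theorem eventually_cofinite_notMem_asIdeal {R : Type*} [CommRing R] [IsDedekindDomain R] {a : R}
    (ha : a ≠ 0) : ∀ᶠ v : HeightOneSpectrum R in cofinite, a ∉ v.asIdeal := by
  have hfin := Ideal.finite_factors (Ideal.span_singleton_eq_bot.not.mpr ha)
  filter_upwards [hfin.compl_mem_cofinite] with v hv
  rwa [Set.mem_compl_iff, Set.mem_ofPred_eq, Ideal.dvd_span_singleton] at hv

section

variable {K L : Type*} [Field K] [NumberField K] [Field L] [NumberField L] [Algebra K L]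
  [IsGalois K L]

theorem mem_degreeOnePrimesOver_of_stabilizer_eq_bot (v : HeightOneSpectrum (𝓞 K))
    {Q : Ideal (𝓞 L)} (hQ : Q ∈ v.asIdeal.primesOver (𝓞 L))
    (h : MulAction.stabilizer Gal(L/K) Q = ⊥) : Q ∈ degreeOnePrimesOver L v.asIdeal := by
  obtain ⟨_, _⟩ := hQ
  have : Finite (𝓞 K ⧸ v.asIdeal) := Ideal.finiteQuotientOfFreeOfNeBot v.asIdeal v.ne_bot
  have hcard :=
    Ideal.card_stabilizer_eq_card_inertia_mul_finrank (G := Gal(L/K)) v.asIdeal Q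
  rw [h, Subgroup.card_bot] at hcard
  have hdeg : Q.inertiaDeg (𝓞 K) = 1 := Nat.eq_one_of_mul_eq_one_left hcard.symm
  refine ⟨‹_›, (Q.over_def v.asIdeal).symm, ?_⟩
  rw [← Ideal.absNorm_pow_inertiaDeg v.asIdeal Q, hdeg, pow_one]

theorem subsingleton_gal_of_eventually_stabilizer_eq_bot
    (h : ∀ᶠ v : HeightOneSpectrum (𝓞 K) in cofinite, ∀ Q ∈ v.asIdeal.primesOver (𝓞 L),
      MulAction.stabilizer Gal(L/K) Q = ⊥) : Subsingleton Gal(L/K) := by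
  obtain ⟨v, hsub, hv⟩ :=
    ((frequently_subsingleton_degreeOnePrimesOver K L).and_eventually h).exists
  obtain ⟨⟨Q, hQ⟩⟩ := (inferInstance : Nonempty (v.asIdeal.primesOver (𝓞 L)))
  have hmem (σ : Gal(L/K)) : σ • Q ∈ degreeOnePrimesOver L v.asIdeal := by
    obtain ⟨_, _⟩ := hQ
    have hσQ : σ • Q ∈ v.asIdeal.primesOver (𝓞 L) := ⟨inferInstance, inferInstance⟩
    exact mem_degreeOnePrimesOver_of_stabilizer_eq_bot v hσQ (hv _ hσQ)
  refine subsingleton_of_forall_eq 1 fun σ => ?_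
  have hσ : σ ∈ MulAction.stabilizer Gal(L/K) Q :=
    hsub (hmem σ) (mem_degreeOnePrimesOver_of_stabilizer_eq_bot v hQ (hv Q hQ))
  rwa [hv Q hQ, Subgroup.mem_bot] at hσ

theorem eventually_stabilizer_eq_bot_of_isPowModAlmostAll {m : ℕ} (hm : 0 < m) {ζ : 𝓞 K}
    (hζ : IsPrimitiveRoot ζ m) {x : 𝓞 K} (hx : x ≠ 0) (h : IsPowModAlmostAll m x) {α : 𝓞 L}
    (hα : α ^ m = algebraMap (𝓞 K) (𝓞 L) x) (hgen : ∀ σ : Gal(L/K), σ • α = α → σ = 1) :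
    ∀ᶠ v : HeightOneSpectrum (𝓞 K) in cofinite, ∀ Q ∈ v.asIdeal.primesOver (𝓞 L),
      MulAction.stabilizer Gal(L/K) Q = ⊥ := by
  filter_upwards [h, eventually_cofinite_notMem_asIdeal hx,
    eventually_cofinite_notMem_asIdeal (Nat.cast_ne_zero.mpr hm.ne')] with v ⟨c, hc⟩ hxv hmv Q hQ
  obtain ⟨_, _⟩ := hQ
  have hmem (a : 𝓞 K) : algebraMap (𝓞 K) (𝓞 L) a ∈ Q ↔ a ∈ v.asIdeal :=
    (Ideal.mem_of_liesOver Q v.asIdeal a).symm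
  refine (Subgroup.eq_bot_iff_forall _).mpr fun σ hσ => hgen σ ?_
  refine smul_eq_self_of_mem_stabilizer (c := algebraMap (𝓞 K) (𝓞 L) c)
    (hζ.map_of_injective (FaithfulSMul.algebraMap_injective (𝓞 K) (𝓞 L)))
    (smul_algebraMap _ _) (smul_algebraMap _ _) (by rw [hα, smul_algebraMap]) hσ ?_ ?_ ?_
  · rwa [← map_natCast (algebraMap (𝓞 K) (𝓞 L)), hmem]
  · exact fun hαQ => hxv ((hmem x).mp (hα ▸ Q.pow_mem_of_mem hαQ m hm))
  · rwa [hα, ← map_pow, ← map_sub, hmem]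

end

open Polynomial in
theorem gal_X_pow_sub_C_ext {K : Type*} [Field K] {m : ℕ} (hm : 0 < m) {ζ : K}
    (hζ : IsPrimitiveRoot ζ m) {x : K} {α : (X ^ m - C x).SplittingField}
    (hα : α ^ m = algebraMap K _ x) {σ : Gal((X ^ m - C x).SplittingField/K)} (hσ : σ α = α) :
    σ = 1 := by
  refine AlgEquiv.coe_toAlgHom_injective <|
    AlgHom.ext_of_adjoin_eq_top (SplittingField.adjoin_rootSet _) fun β hβ => ?_
  have hβ' : β ^ m = α ^ m := by
    rwa [mem_rootSet_of_ne (X_pow_sub_C_ne_zero hm x), map_sub, map_pow, aeval_X, aeval_C,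
      sub_eq_zero, ← hα] at hβ
  obtain ⟨i, rfl⟩ := exists_eq_pow_mul_of_pow_eq_pow hm (hζ.map_of_injective
    (algebraMap K (X ^ m - C x).SplittingField).injective) hβ'
  simp only [map_mul, map_pow, AlgHom.commutes, AlgEquiv.coe_toAlgHom, hσ, AlgEquiv.one_apply]

open Polynomial in
theorem exists_pow_eq_of_isPrimitiveRoot {K : Type*} [Field K] [NumberField K] {m : ℕ}
    (hm : 0 < m) {ζ : 𝓞 K} (hζ : IsPrimitiveRoot ζ m) {x : 𝓞 K} (hx : x ≠ 0)
    (h : IsPowModAlmostAll m x) : ∃ w : K, w ^ m = x := by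
  let L := (X ^ m - C (x : K)).SplittingField
  have : NumberField L := NumberField.of_module_finite K L
  have : IsGalois K L := ⟨⟩
  have : NeZero m := ⟨hm.ne'⟩
  obtain ⟨α, hα⟩ : ∃ α : L, α ^ m = algebraMap K L x :=
    ⟨rootOfSplitsXPowSubC hm (x : K) L, rootOfSplitsXPowSubC_pow (x : K) L⟩
  let α' : 𝓞 L := ⟨α, .of_pow hm (hα ▸ (RingOfIntegers.isIntegral_coe x).algebraMap)⟩
  have hgen (σ : Gal(L/K)) (hσ : σ • α' = α') : σ = 1 :=
    gal_X_pow_sub_C_ext hm (hζ.map_of_injective RingOfIntegers.coe_injective) hα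
      (congrArg (algebraMap (𝓞 L) L) hσ)
  have := subsingleton_gal_of_eventually_stabilizer_eq_bot <|
    eventually_stabilizer_eq_bot_of_isPowModAlmostAll hm hζ hx h (α := α')
      (RingOfIntegers.coe_injective hα) hgen
  obtain ⟨w, hw⟩ : α ∈ Set.range (algebraMap K L) :=
    (IsGalois.mem_range_algebraMap_iff_fixed α).mpr fun σ => by
      rw [Subsingleton.elim σ 1, AlgEquiv.one_apply]
  exact ⟨w, (algebraMap K L).injective (by rw [map_pow, hw, hα])⟩

end Kummer

section Arithmetic

open Finset

theorem emultiplicity_geom_sum {p t : ℕ} (hp : p.Prime) (ht : p ∣ t) (ht4 : p = 2 → 4 ∣ t)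
    (n : ℕ) : emultiplicity p (∑ i ∈ range n, (t + 1) ^ i) = emultiplicity p n := by
  rcases eq_or_ne t 0 with rfl | ht0
  · simp only [zero_add, one_pow, sum_const, card_range, smul_eq_mul, mul_one]
  have hdvd : (p : ℤ) ∣ (t + 1) - 1 := by simpa using Int.natCast_dvd_natCast.mpr ht
  have hndvd : ¬(p : ℤ) ∣ t + 1 := by
    rw [dvd_add_right (Int.natCast_dvd_natCast.mpr ht)]
    exact_mod_cast hp.not_dvd_one
  have hLTE : emultiplicity (p : ℤ) ((t + 1) ^ n - 1 ^ n) =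
      emultiplicity (p : ℤ) ((t + 1) - 1) + emultiplicity p n := by
    rcases hp.eq_two_or_odd' with rfl | hodd
    · rw [← Int.natCast_emultiplicity]
      exact Int.two_pow_sub_pow' n (by simpa using Int.natCast_dvd_natCast.mpr (ht4 rfl)) hndvd
    · exact Int.emultiplicity_pow_sub_pow hp hodd hdvd hndvd n
  rw [one_pow, ← mul_geom_sum, emultiplicity_mul (Nat.prime_iff_prime_int.mp hp),
    add_sub_cancel_right] at hLTE
  have hfin : emultiplicity (p : ℤ) t ≠ ⊤ := by
    rw [Int.natCast_emultiplicity, finiteMultiplicity_iff_emultiplicity_ne_top.symm]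
    exact Nat.finiteMultiplicity_iff.mpr ⟨hp.ne_one, Nat.pos_of_ne_zero ht0⟩
  rw [← Int.natCast_emultiplicity, ← ENat.add_right_injective_of_ne_top hfin hLTE]
  push_cast
  rfl

theorem pow_dvd_of_pow_add_dvd_mul_geom_sum {p t : ℕ} (hp : p.Prime) (ht : p ∣ t)
    (ht4 : p = 2 → 4 ∣ t) {b j m : ℕ}
    (h : p ^ (j + m) ∣ b * ∑ i ∈ range (p ^ m), (t + 1) ^ i) : p ^ j ∣ b := by
  rw [pow_dvd_iff_le_emultiplicity] at h ⊢
  rw [emultiplicity_mul hp.prime, emultiplicity_geom_sum hp ht ht4,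
    emultiplicity_pow_self_of_prime hp.prime, Nat.cast_add] at h
  exact (ENat.add_le_add_iff_right (ENat.natCast_ne_top m)).mp h

theorem pow_modEq_one_of_pow_dvd {p t : ℕ} (hp : p.Prime) (ht : p ∣ t) (ht4 : p = 2 → 4 ∣ t)
    {j : ℕ} (hj : p ^ j ∣ t) (m : ℕ) : (t + 1) ^ p ^ m ≡ 1 [MOD p ^ (j + m)] := by
  have hsum : p ^ m ∣ ∑ i ∈ range (p ^ m), (t + 1) ^ i := by
    rw [pow_dvd_iff_le_emultiplicity, emultiplicity_geom_sum hp ht ht4,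
      emultiplicity_pow_self_of_prime hp.prime]
  rw [← geom_sum_mul_add, add_comm j, pow_add]
  exact (Nat.modEq_zero_iff_dvd.mpr (mul_dvd_mul hsum hj)).add_right 1

end Arithmetic

section Cyclotomic

theorem pow_smul_eq_pow_pow {G A : Type*} [Monoid G] [CommMonoid A] [MulDistribMulAction G A]
    {τ : G} {ζ : A} {t : ℕ} (hζ : τ • ζ = ζ ^ t) (n : ℕ) : τ ^ n • ζ = ζ ^ t ^ n := by
  induction n with
  | zero => rw [pow_zero, one_smul, pow_zero, pow_one]
  | succ n ih => rw [pow_succ', mul_smul, ih, smul_pow', hζ, ← pow_mul, pow_succ']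

theorem pow_smul_eq_pow_mul_geom_sum_mul {G A : Type*} [Monoid G] [CommMonoid A]
    [MulDistribMulAction G A] {τ : G} {ζ α : A} {t b : ℕ} (hζ : τ • ζ = ζ ^ t)
    (hα : τ • α = ζ ^ b * α) (n : ℕ) :
    τ ^ n • α = ζ ^ (b * ∑ i ∈ Finset.range n, t ^ i) * α := by
  induction n with
  | zero => rw [pow_zero, one_smul, Finset.sum_range_zero, mul_zero, pow_zero, one_mul]
  | succ n ih =>
    rw [pow_succ', mul_smul, ih, smul_mul', smul_pow', hζ, hα, geom_sum_succ, ← mul_assoc,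
      ← pow_mul, ← pow_add]
    ring_nf

theorem exists_pow_eq_pow_gcd {F : Type*} [Field F] {x u : F} (hx : x ≠ 0) {a M : ℕ}
    (h : u ^ M = x ^ a) : ∃ z : F, z ^ M = x ^ a.gcd M := by
  refine ⟨u ^ a.gcdA M * x ^ a.gcdB M, ?_⟩
  rw [mul_pow, ← zpow_natCast, zpow_comm, zpow_natCast, h, ← zpow_natCast (x ^ _), ← zpow_natCast x,
    ← zpow_natCast x, Nat.gcd_eq_gcd_ab, zpow_add₀ hx, zpow_mul, zpow_mul, zpow_comm x M]

section

variable {F K : Type*} [Field F] [Field K] [Algebra F K] {M : ℕ} {ζ α : K} {x : F}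

theorem exists_apply_eq_pow_mul (hM : 0 < M) (hζ : IsPrimitiveRoot ζ M)
    (hα : α ^ M = algebraMap F K x) (σ : Gal(K/F)) : ∃ b : ℕ, σ α = ζ ^ b * α :=
  exists_eq_pow_mul_of_pow_eq_pow hM hζ (by rw [← map_pow, hα, AlgEquiv.commutes])

theorem exists_apply_eq_pow_succ (hM : 0 < M) (hζ : IsPrimitiveRoot ζ M) (σ : Gal(K/F)) :
    ∃ t : ℕ, σ ζ = ζ ^ (t + 1) := by
  obtain ⟨t, ht⟩ := exists_apply_eq_pow_mul (x := 1) hM hζ (by rw [hζ.pow_eq_one, map_one]) σ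
  exact ⟨t, by rw [ht, pow_succ]⟩

variable [FiniteDimensional F K] [IsGalois F K]

theorem exists_pow_eq_of_forall_apply_eq {β : K} (hβ : ∀ σ : Gal(K/F), σ β = β)
    (h : β ^ M = algebraMap F K x) : ∃ z : F, z ^ M = x := by
  obtain ⟨z, rfl⟩ := (IsGalois.mem_range_algebraMap_iff_fixed β).mpr hβ
  exact ⟨z, (algebraMap F K).injective (by rw [map_pow, h])⟩

theorem exists_pow_eq_of_generator (hM : 0 < M) (hζ : IsPrimitiveRoot ζ M) {τ : Gal(K/F)}
    (hτ : ∀ σ, σ ∈ Subgroup.zpowers τ) {t b : ℕ} (ht : τ ζ = ζ ^ (t + 1)) (hb : τ α = ζ ^ b * α)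
    (htb : t.gcd M ∣ b) (hα : α ^ M = algebraMap F K x) : ∃ z : F, z ^ M = x := by
  have hζ0 : ζ ≠ 0 := hζ.ne_zero hM.ne'
  obtain ⟨c, hc⟩ : ∃ c : ℤ, (M : ℤ) ∣ t * c + b := by
    obtain ⟨c, d, hcd⟩ := Int.gcd_dvd_iff.mp (Int.gcd_natCast_natCast t M ▸ htb)
    exact ⟨-c, d, by linear_combination hcd⟩
  have hfix : τ (ζ ^ c * α) = ζ ^ c * α := by
    have hroot : ζ ^ (t * c + b) = 1 := (hζ.zpow_eq_one_iff_dvd _).mpr hc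
    calc τ (ζ ^ c * α) = ζ ^ ((t + 1) * c + b) * α := by
          rw [map_mul, map_zpow₀, ht, hb, ← mul_assoc, ← zpow_natCast, ← zpow_natCast, ← zpow_mul,
            ← zpow_add₀ hζ0, Nat.cast_succ]
      _ = ζ ^ (t * c + b) * ζ ^ c * α := by rw [← zpow_add₀ hζ0]; ring_nf
      _ = ζ ^ c * α := by rw [hroot, one_mul]
  refine exists_pow_eq_of_forall_apply_eq (β := ζ ^ c * α) (fun σ => ?_) ?_
  · exact (Subgroup.zpowers_le (H := MulAction.stabilizer Gal(K/F) (ζ ^ c * α))).mpr hfix (hτ σ)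
  · rw [mul_pow, hα, ← zpow_natCast, zpow_comm, zpow_natCast, hζ.pow_eq_one, one_zpow, one_mul]

theorem exists_pow_prime_pow_eq_of_generator {p : ℕ} (hp : p.Prime) {r : ℕ}
    (hζ : IsPrimitiveRoot ζ (p ^ r)) {τ : Gal(K/F)} (hτ : ∀ σ, σ ∈ Subgroup.zpowers τ)
    (hfaith : ∀ σ : Gal(K/F), σ ζ = ζ → σ = 1) {t : ℕ} (ht : τ ζ = ζ ^ (t + 1)) (hpt : p ∣ t)
    (hpt4 : p = 2 → 4 ∣ t) (hx : x ≠ 0) (hα : α ^ p ^ r = algebraMap F K x) :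
    ∃ z : F, z ^ p ^ r = x := by
  have hM : 0 < p ^ r := pow_pos hp.pos r
  have hα0 : α ≠ 0 := ne_zero_pow hM.ne' (hα ▸ (map_ne_zero _).mpr hx)
  obtain ⟨b, hb⟩ := exists_apply_eq_pow_mul hM hζ hα τ
  refine exists_pow_eq_of_generator hM hζ hτ ht hb ?_ hα
  obtain ⟨j, hjr, hj⟩ := (Nat.dvd_prime_pow hp).mp (Nat.gcd_dvd_right t (p ^ r))
  obtain ⟨m, rfl⟩ := Nat.exists_eq_add_of_le hjr
  have htζ : τ • ζ = ζ ^ (t + 1) := ht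
  have hτm : τ ^ p ^ m = 1 := by
    have hmod := pow_modEq_one_of_pow_dvd hp hpt hpt4 (hj ▸ Nat.gcd_dvd_left t _) m
    have hτζ := (pow_smul_eq_pow_pow htζ _).trans (pow_eq_pow_of_modEq hmod hζ.pow_eq_one)
    exact hfaith _ (hτζ.trans (pow_one ζ))
  have hb1 : ζ ^ (b * ∑ i ∈ Finset.range (p ^ m), (t + 1) ^ i) = 1 := by
    have := pow_smul_eq_pow_mul_geom_sum_mul htζ (show τ • α = _ from hb) (p ^ m)
    rwa [hτm, one_smul, eq_comm, mul_eq_right₀ hα0] at this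
  rw [hj]
  exact pow_dvd_of_pow_add_dvd_mul_geom_sum hp hpt hpt4 ((hζ.pow_eq_one_iff_dvd _).mp hb1)

-- `α ^ (t + 1) / τ α` is fixed by every `σ` commuting with `τ`; its `M`-th power is `x ^ t`.
theorem exists_pow_eq_pow_gcd_of_commute (hM : 0 < M) (hζ : IsPrimitiveRoot ζ M) {τ : Gal(K/F)}
    (hτ : ∀ σ : Gal(K/F), Commute σ τ) {t : ℕ} (ht : τ ζ = ζ ^ (t + 1)) (hx : x ≠ 0)
    (hα : α ^ M = algebraMap F K x) : ∃ z : F, z ^ M = x ^ t.gcd M := by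
  suffices ∃ u : F, u ^ M = x ^ t from this.elim fun u hu => exists_pow_eq_pow_gcd hx hu
  have hζ0 : ζ ≠ 0 := hζ.ne_zero hM.ne'
  refine exists_pow_eq_of_forall_apply_eq (β := α ^ (t + 1) / τ α) (fun σ => ?_) ?_
  · obtain ⟨e, he⟩ := exists_apply_eq_pow_mul hM hζ hα σ
    have hcomm : σ (τ α) = τ (σ α) := by
      rw [← AlgEquiv.mul_apply, (hτ σ).eq, AlgEquiv.mul_apply]
    rw [map_div₀, map_pow, hcomm, he, map_mul, map_pow, ht, mul_pow, ← pow_mul, ← pow_mul,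
      mul_comm e, mul_div_mul_left _ _ (pow_ne_zero _ hζ0)]
  · have hx0 : algebraMap F K x ≠ 0 := (map_ne_zero _).mpr hx
    rw [div_pow, ← map_pow, hα, AlgEquiv.commutes, pow_right_comm, hα, pow_succ,
      mul_div_cancel_right₀ _ hx0, map_pow]

end

theorem isCyclic_ker_unitsMap_four (n : ℕ) :
    IsCyclic (ZMod.unitsMap (pow_dvd_pow 2 (Nat.le_add_left 2 n) : 2 ^ 2 ∣ 2 ^ (n + 2))).ker := by
  have hdvd : 2 ^ 2 ∣ 2 ^ (n + 2) := pow_dvd_pow 2 (Nat.le_add_left 2 n)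
  obtain ⟨u, hu⟩ : IsUnit (5 : ZMod (2 ^ (n + 2))) :=
    (ZMod.isUnit_iff_coprime 5 _).mpr (Nat.Coprime.pow_right _ (by norm_num))
  have hord : orderOf u = 2 ^ n := by rw [← orderOf_units, hu, ZMod.orderOf_five]
  have hker : u ∈ (ZMod.unitsMap hdvd).ker := by
    rw [MonoidHom.mem_ker, Units.ext_iff, ZMod.unitsMap_val, hu, ← Nat.cast_ofNat (n := 5),
      ZMod.cast_natCast hdvd]
    decide
  have hindex : (ZMod.unitsMap hdvd).ker.index = 2 := by
    rw [Subgroup.index_ker, MonoidHom.range_eq_top.mpr (ZMod.unitsMap_surjective hdvd),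
      Subgroup.card_top, Nat.card_eq_fintype_card, ZMod.card_units_eq_totient]
    decide
  have hcard : Nat.card (ZMod.unitsMap hdvd).ker = 2 ^ n := by
    have hunits : Nat.card (ZMod (2 ^ (n + 2)))ˣ = 2 ^ n * 2 := by
      rw [Nat.card_eq_fintype_card, ZMod.card_units_eq_totient,
        Nat.totient_prime_pow_succ Nat.prime_two, pow_succ, Nat.add_one_sub_one, mul_one]
    have h := (ZMod.unitsMap hdvd).ker.card_mul_index
    rw [hindex, hunits] at h
    exact Nat.eq_of_mul_eq_mul_right two_pos h
  exact isCyclic_of_orderOf_eq_card ⟨u, hker⟩ (by rw [Subgroup.orderOf_mk, hord, hcard])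

variable {F K : Type*} [Field F] [Field K] [Algebra F K]

theorem autToPow_eq_natCast {M t : ℕ} [NeZero M] {ζ : K} (hζ : IsPrimitiveRoot ζ M)
    {σ : Gal(K/F)} (h : σ ζ = ζ ^ t) : (hζ.autToPow F σ : ZMod M) = t := by
  rw [← hζ.autToPow_spec F σ, ← pow_mod_orderOf ζ t, ← hζ.eq_orderOf] at h
  rw [← ZMod.natCast_zmod_val (hζ.autToPow F σ : ZMod M),
    hζ.pow_inj (ZMod.val_lt _) (Nat.mod_lt t (NeZero.pos M)) h, ZMod.natCast_mod]

theorem isCyclic_gal_of_forall_four_dvd {r : ℕ} [IsCyclotomicExtension {2 ^ r} F K] {ζ : K}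
    (hζ : IsPrimitiveRoot ζ (2 ^ r)) (h : ∀ (σ : Gal(K/F)) (t : ℕ), σ ζ = ζ ^ (t + 1) → 4 ∣ t) :
    IsCyclic Gal(K/F) := by
  obtain ⟨n, rfl⟩ : ∃ n, r = n + 2 := by
    have h4 : 2 ^ 2 ∣ 2 ^ r :=
      h 1 (2 ^ r) (by rw [pow_succ, hζ.pow_eq_one, one_mul, AlgEquiv.one_apply])
    exact Nat.exists_eq_add_of_le' ((Nat.pow_dvd_pow_iff_le_right one_lt_two).mp h4)
  have hdvd : 2 ^ 2 ∣ 2 ^ (n + 2) := pow_dvd_pow 2 (Nat.le_add_left 2 n)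
  have hker (σ : Gal(K/F)) : hζ.autToPow F σ ∈ (ZMod.unitsMap hdvd).ker := by
    obtain ⟨t, ht⟩ := exists_apply_eq_pow_succ (pow_pos two_pos _) hζ σ
    rw [MonoidHom.mem_ker, Units.ext_iff, ZMod.unitsMap_val, autToPow_eq_natCast hζ ht,
      ZMod.cast_natCast hdvd, Nat.cast_succ, (ZMod.natCast_eq_zero_iff t _).mpr (h σ t ht),
      zero_add, Units.val_one]
  have := isCyclic_ker_unitsMap_four n
  exact isCyclic_of_injective ((hζ.autToPow F).codRestrict _ hker) fun σ τ hστ =>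
    hζ.autToPow_injective F (congrArg Subtype.val hστ)

theorem eq_one_of_apply_eq_self {M : ℕ} [NeZero M] [IsCyclotomicExtension {M} F K] {ζ : K}
    (hζ : IsPrimitiveRoot ζ M) (σ : Gal(K/F)) (hσ : σ ζ = ζ) : σ = 1 :=
  AlgEquiv.coe_toAlgHom_injective ((hζ.powerBasis F).algHom_ext (by simpa using hσ))

variable [FiniteDimensional F K] [IsGalois F K] {x : F} {ζ α : K}

theorem exists_pow_eq_of_isCyclotomicExtension_of_ne_two {p r : ℕ} (hp : p.Prime) (hp2 : p ≠ 2)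
    [IsCyclotomicExtension {p ^ r} F K] (hζ : IsPrimitiveRoot ζ (p ^ r)) (hx : x ≠ 0)
    (hα : α ^ p ^ r = algebraMap F K x) : ∃ z : F, z ^ p ^ r = x := by
  have hM : 0 < p ^ r := pow_pos hp.pos r
  have : NeZero (p ^ r) := ⟨hM.ne'⟩
  have : IsCyclic Gal(K/F) :=
    have := ZMod.isCyclic_units_of_prime_pow p hp hp2 r
    isCyclic_of_injective _ (hζ.autToPow_injective F)
  obtain ⟨τ, hτ⟩ := IsCyclic.exists_generator (α := Gal(K/F))
  obtain ⟨t, ht⟩ := exists_apply_eq_pow_succ hM hζ τ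
  by_cases hpt : p ∣ t
  · exact exists_pow_prime_pow_eq_of_generator hp hζ hτ (eq_one_of_apply_eq_self hζ) ht hpt
      (fun h => absurd h hp2) hx hα
  · obtain ⟨b, hb⟩ := exists_apply_eq_pow_mul hM hζ hα τ
    have hcop : t.gcd (p ^ r) = 1 := ((hp.coprime_iff_not_dvd.mpr hpt).symm).pow_right r
    exact exists_pow_eq_of_generator hM hζ hτ ht hb (hcop ▸ one_dvd b) hα

theorem exists_pow_eq_sq_of_isCyclotomicExtension_two_pow {r : ℕ}
    [IsCyclotomicExtension {2 ^ r} F K] (hζ : IsPrimitiveRoot ζ (2 ^ r)) (hx : x ≠ 0)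
    (hα : α ^ 2 ^ r = algebraMap F K x) : ∃ z : F, z ^ 2 ^ r = x ^ 2 := by
  have hM : 0 < 2 ^ r := pow_pos two_pos r
  by_cases h : ∀ (σ : Gal(K/F)) (t : ℕ), σ ζ = ζ ^ (t + 1) → 4 ∣ t
  · have := isCyclic_gal_of_forall_four_dvd hζ h
    obtain ⟨τ, hτ⟩ := IsCyclic.exists_generator (α := Gal(K/F))
    obtain ⟨t, ht⟩ := exists_apply_eq_pow_succ hM hζ τ
    have h4 : 4 ∣ t := h τ t ht
    obtain ⟨z, hz⟩ := exists_pow_prime_pow_eq_of_generator Nat.prime_two hζ hτ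
      (eq_one_of_apply_eq_self hζ) ht (dvd_trans (by norm_num) h4) (fun _ => h4) hx hα
    exact ⟨z ^ 2, by rw [pow_right_comm, hz]⟩
  · push Not at h
    obtain ⟨τ, t, ht, h4⟩ := h
    have := IsCyclotomicExtension.isMulCommutative {2 ^ r} F K
    obtain ⟨z, hz⟩ := exists_pow_eq_pow_gcd_of_commute hM hζ (mul_comm' · τ) ht hx hα
    obtain ⟨d, hd⟩ : t.gcd (2 ^ r) ∣ 2 := by
      obtain ⟨j, -, hj⟩ := (Nat.dvd_prime_pow Nat.prime_two).mp (Nat.gcd_dvd_right t (2 ^ r))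
      have hj1 : j ≤ 1 := by
        by_contra! hlt
        exact h4 ((pow_dvd_pow 2 hlt).trans (hj ▸ Nat.gcd_dvd_left t (2 ^ r)))
      exact hj ▸ pow_dvd_pow 2 hj1
    exact ⟨z ^ d, by rw [pow_right_comm, hz, ← pow_mul, ← hd]⟩

end Cyclotomic

section Global

theorem IsPowModAlmostAll.of_dvd {R : Type*} [CommRing R] {m n : ℕ} {x : R} (hmn : m ∣ n)
    (h : IsPowModAlmostAll n x) : IsPowModAlmostAll m x := by
  obtain ⟨d, rfl⟩ := hmn
  exact h.mono fun v ⟨c, hc⟩ => ⟨c ^ d, by rwa [← pow_mul, mul_comm]⟩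

theorem IsPowModAlmostAll.map_algebraMap {R S : Type*} [CommRing R] [Nontrivial R] [CommRing S]
    [IsDomain S] [Algebra R S] [Module.Finite R S] {m : ℕ} {x : R} (h : IsPowModAlmostAll m x) :
    IsPowModAlmostAll m (algebraMap R S x) := by
  let π (w : HeightOneSpectrum S) : HeightOneSpectrum R :=
    ⟨w.asIdeal.under R, inferInstance, Ideal.under_ne_bot R w.ne_bot⟩
  have hπ : Tendsto π cofinite cofinite := .cofinite_of_finite_preimage_singleton fun v =>
    ((Algebra.QuasiFinite.finite_primesOver v.asIdeal).preimage
      (fun _ _ _ _ => HeightOneSpectrum.ext)).subset fun w hw =>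
        ⟨w.isPrime, ⟨congrArg HeightOneSpectrum.asIdeal hw.symm⟩⟩
  refine (hπ.eventually h).mono fun w ⟨c, hc⟩ => ⟨algebraMap R S c, ?_⟩
  rw [← map_pow, ← map_sub]
  exact hc

variable {F : Type*} [Field F] [NumberField F]

theorem exists_pow_prime_pow_eq_sq_of_isPowModAlmostAll {p : ℕ} (hp : p.Prime) (r : ℕ) {x : 𝓞 F}
    (hx : x ≠ 0) (h : IsPowModAlmostAll (p ^ r) x) : ∃ z : F, z ^ p ^ r = (x : F) ^ 2 := by
  have hM : 0 < p ^ r := pow_pos hp.pos r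
  have : NeZero (p ^ r) := ⟨hM.ne'⟩
  let K := CyclotomicField (p ^ r) F
  have : NumberField K := NumberField.of_module_finite F K
  have : IsGalois F K := IsCyclotomicExtension.isGalois {p ^ r} F K
  have hζ := IsCyclotomicExtension.zeta_spec (p ^ r) F K
  have hinj := FaithfulSMul.algebraMap_injective (𝓞 F) (𝓞 K)
  have hxF : (x : F) ≠ 0 := RingOfIntegers.coe_ne_zero_iff.mpr hx
  obtain ⟨α, hα : α ^ p ^ r = algebraMap F K x⟩ := exists_pow_eq_of_isPrimitiveRoot hM
    hζ.toInteger_isPrimitiveRoot ((map_ne_zero_iff _ hinj).mpr hx) (h.map_algebraMap (S := 𝓞 K))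
  rcases eq_or_ne p 2 with rfl | hp2
  · exact exists_pow_eq_sq_of_isCyclotomicExtension_two_pow hζ hxF hα
  · obtain ⟨z, hz⟩ := exists_pow_eq_of_isCyclotomicExtension_of_ne_two hp hp2 hζ hxF hα
    exact ⟨z ^ 2, by rw [pow_right_comm, hz]⟩

theorem exists_pow_eq_sq_of_isPowModAlmostAll {m : ℕ} (hm : 0 < m) {x : 𝓞 F} (hx : x ≠ 0)
    (h : IsPowModAlmostAll m x) : ∃ z : F, z ^ m = (x : F) ^ 2 := by
  induction m using Nat.recOnPosPrimePosCoprime with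
  | zero => exact absurd hm (lt_irrefl 0)
  | one => exact ⟨x ^ 2, pow_one _⟩
  | prime_pow p r hp => exact exists_pow_prime_pow_eq_sq_of_isPowModAlmostAll hp r hx h
  | coprime a b ha hb hab iha ihb =>
    obtain ⟨u, hu⟩ := iha (zero_lt_one.trans ha) (h.of_dvd (Nat.dvd_mul_right a b))
    obtain ⟨v, hv⟩ := ihb (zero_lt_one.trans hb) (h.of_dvd (Nat.dvd_mul_left b a))
    obtain ⟨z, rfl, -⟩ := (pow_eq_pow_iff_of_coprime hab).mp (hu.trans hv.symm)
    exact ⟨z, by rw [← hu, ← pow_mul, mul_comm]⟩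

end Global

section Completion

theorem valuation_pow_sub_pow_lt_one {R Γ₀ : Type*} [CommRing R]
    [LinearOrderedCommGroupWithZero Γ₀] (v : Valuation R Γ₀) {a b : R} (ha : v a ≤ 1) (hb : v b ≤ 1)
    (hab : v (a - b) < 1) (m : ℕ) : v (a ^ m - b ^ m) < 1 := by
  rw [← geom_sum₂_mul, map_mul]
  refine (mul_le_of_le_one_left' (v.map_sum_le fun i _ => ?_)).trans_lt hab
  rw [map_mul, map_pow, map_pow]
  exact mul_le_one' (pow_le_one' ha _) (pow_le_one' hb _)

variable {R K : Type*} [CommRing R] [IsDedekindDomain R] [Field K] [Algebra R K]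
  [IsFractionRing R K]

theorem valued_algebraMap_adicCompletion (v : HeightOneSpectrum R) (k : K) :
    Valued.v (algebraMap K (v.adicCompletion K) k) = v.valuation K k :=
  v.valuedAdicCompletion_eq_valuation' k

theorem exists_valued_algebraMap_sub_lt_one (v : HeightOneSpectrum R) {y : v.adicCompletion K}
    (hy : Valued.v y ≤ 1) :
    ∃ c : R, Valued.v (algebraMap K (v.adicCompletion K) (algebraMap R K c) - y) < 1 := by
  have hnhds : {z : v.adicCompletion K | Valued.v (z - y) < 1} ∈ 𝓝 y := by
    rw [Valued.mem_nhds]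
    refine ⟨1, fun z hz => ?_⟩
    rwa [Set.mem_ofPred_eq, Units.val_one, Valuation.restrict_lt_one_iff] at hz
  obtain ⟨a, ha : Valued.v (algebraMap K (v.adicCompletion K) a - y) < 1⟩ :=
    (v.denseRange_algebraMap K).mem_nhds hnhds
  have ha1 : v.valuation K a ≤ 1 := by
    rw [← valued_algebraMap_adicCompletion, ← sub_add_cancel (algebraMap K _ a) y]
    exact Valuation.map_add_le _ ha.le hy
  obtain ⟨c, hc⟩ := v.exists_valuation_sub_lt_of_integer ha1 1
  rw [Units.val_one, ← valued_algebraMap_adicCompletion, map_sub] at hc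
  refine ⟨c, ?_⟩
  rw [← sub_add_sub_cancel _ (algebraMap K (v.adicCompletion K) a)]
  exact Valuation.map_add_lt _ hc ha

theorem exists_sub_pow_mem_of_algebraMap_adicCompletion_eq_pow (v : HeightOneSpectrum R) {x : R}
    {m : ℕ} (hm : m ≠ 0) {y : v.adicCompletion K}
    (hy : algebraMap K (v.adicCompletion K) (algebraMap R K x) = y ^ m) :
    ∃ c : R, x - c ^ m ∈ v.asIdeal := by
  have hy1 : Valued.v y ≤ 1 := by
    rw [← pow_le_one_iff hm, ← map_pow, ← hy, valued_algebraMap_adicCompletion]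
    exact v.valuation_le_one x
  obtain ⟨c, hc⟩ := exists_valued_algebraMap_sub_lt_one v hy1
  have hc1 : Valued.v (algebraMap K (v.adicCompletion K) (algebraMap R K c)) ≤ 1 := by
    rw [valued_algebraMap_adicCompletion]
    exact v.valuation_le_one c
  have hpow := valuation_pow_sub_pow_lt_one Valued.v hc1 hy1 hc m
  rw [← hy, ← map_pow, ← map_pow, ← map_sub, ← map_sub, valued_algebraMap_adicCompletion,
    HeightOneSpectrum.valuation_lt_one_iff_mem] at hpow
  exact ⟨c, neg_sub (c ^ m) x ▸ v.asIdeal.neg_mem hpow⟩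

theorem exists_pow_eq_sq_of_eventually_adicCompletion {F : Type*} [Field F] [NumberField F]
    {m : ℕ} (hm : 0 < m) {x : F} (hx : x ≠ 0)
    (hloc : ∀ᶠ v : HeightOneSpectrum (𝓞 F) in cofinite,
      ∃ y : v.adicCompletion F, algebraMap F (v.adicCompletion F) x = y ^ m) :
    ∃ z : F, z ^ m = x ^ 2 := by
  obtain ⟨n, d, -, rfl⟩ := IsFractionRing.div_surjective (A := 𝓞 F) x
  obtain ⟨hn0, hd0⟩ := div_ne_zero_iff.mp hx
  -- Multiplying by the `m`-th power of the denominator makes `x` integral.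
  have hclear : algebraMap (𝓞 F) F (n * d ^ (m - 1)) =
      algebraMap (𝓞 F) F n / algebraMap (𝓞 F) F d * algebraMap (𝓞 F) F d ^ m := by
    rw [map_mul, map_pow, div_mul_eq_mul_div, eq_div_iff hd0, mul_assoc, pow_sub_one_mul hm.ne']
  have hne : n * d ^ (m - 1) ≠ 0 :=
    mul_ne_zero (ne_zero_of_map hn0) (pow_ne_zero _ (ne_zero_of_map hd0))
  have hres : IsPowModAlmostAll m (n * d ^ (m - 1)) := hloc.mono fun v ⟨y, hy⟩ =>
    exists_sub_pow_mem_of_algebraMap_adicCompletion_eq_pow (K := F) v hm.ne'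
      (y := y * algebraMap F (v.adicCompletion F) (algebraMap (𝓞 F) F d)) <| by
        rw [hclear, map_mul, hy, map_pow, mul_pow]
  obtain ⟨z, hz : z ^ m = algebraMap (𝓞 F) F (n * d ^ (m - 1)) ^ 2⟩ :=
    exists_pow_eq_sq_of_isPowModAlmostAll hm hne hres
  refine ⟨z / algebraMap (𝓞 F) F d ^ 2, ?_⟩
  rw [div_pow, hz, hclear, mul_pow, pow_right_comm _ m 2,
    mul_div_cancel_right₀ _ (pow_ne_zero m (pow_ne_zero 2 hd0))]

end Completion

theorem square_is_two_k_power_of_locally_two_k_power_general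
    {F : Type*} [Field F] [NumberField F] {k : ℕ} (hk : 0 < k) {x : F} (hx : x ≠ 0)
    (hloc : ∀ᶠ v : HeightOneSpectrum (𝓞 F) in cofinite,
      ∃ y : v.adicCompletion F, algebraMap F (v.adicCompletion F) x = y ^ (2 * k)) :
    (∃ z : F, z ≠ 0 ∧ x ^ 2 = z ^ (2 * k)) ∧
      ∃ y : F, y ≠ 0 ∧ (x = y ^ k ∨ x = -y ^ k) := by
  obtain ⟨z, hz⟩ := exists_pow_eq_sq_of_eventually_adicCompletion (mul_pos two_pos hk) hx hloc
  have hz0 : z ≠ 0 := ne_zero_pow (mul_pos two_pos hk).ne' (hz ▸ pow_ne_zero 2 hx)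
  refine ⟨⟨z, hz0, hz.symm⟩, z, hz0, ?_⟩
  rw [← sq_eq_sq_iff_eq_or_eq_neg, ← hz, ← pow_mul, mul_comm]

/-- Let `F` be a number field and `k` a positive integer.  If `x ∈ F^×` is a
`2k`-th power in the completion `F_𝔭` at every finite place `𝔭` of `F`, then `x²` is a
`2k`-th power in `F^×`; consequently there is `y ∈ F^×` with `x = y^k` or `x = −y^k`. -/
theorem square_is_two_k_power_of_locally_two_k_power
    (F : Type*) [Field F] [NumberField F] (k : ℕ) (hk : 0 < k)
    (x : F) (hx : x ≠ 0)
    (hloc : ∀ v : HeightOneSpectrum (𝓞 F),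
      ∃ y : v.adicCompletion F, algebraMap F (v.adicCompletion F) x = y ^ (2 * k)) :
    (∃ z : F, z ≠ 0 ∧ x ^ 2 = z ^ (2 * k)) ∧
      ∃ y : F, y ≠ 0 ∧ (x = y ^ k ∨ x = -y ^ k) :=
  square_is_two_k_power_of_locally_two_k_power_general hk hx (.of_forall hloc)
end
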